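/- arXiv:0811.0359 — 2 statements merged into one kernel-verified Lean document; each statement's English description precedes it below -/
import Mathlib

section
/- Let X ∈ {E,A}. For every normal logic program P: Cnˣ_og(τ^∨_EH(P)) = Cnˣ_og(τ_EH(P)) = Cnˣ_og(τ_EB(P)), Cnˣ_og(τ^∨_EB(P)) = Cnˣ_og(τ^∨_HP(P)), Cnˣ_og(τ_EB(P)) ⊆ Cnˣ_og(τ_HP(P)), and Cnˣ_og(τ_HP(P)) ⊆ Cnˣ_og(τ^∨_HP(P)). Moreover, for each pair of embeddings for which no inclusion follows from these relations by reflexivity and transitivity, there exists a normal program for which the inclusion of the corresponding sets of objective ground consequences fails. -/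
set_option autoImplicit false

/-! # First-order autoepistemic logic (FO-AEL): syntax -/

structure Sig : Type 1 where
  Func : Type
  Pred : Type
  arF : Func → ℕ
  arP : Pred → ℕ

inductive Term (S : Sig) : Type
  | var : ℕ → Term S
  | func : (f : S.Func) → (Fin (S.arF f) → Term S) → Term S

inductive Formula (S : Sig) : Type
  | atom : (p : S.Pred) → (Fin (S.arP p) → Term S) → Formula S
  | eq : Term S → Term S → Formula S
  | not : Formula S → Formula S
  | and : Formula S → Formula S → Formula S
  | ex : ℕ → Formula S → Formula S
  | box : Formula S → Formula S

namespace Term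

variable {S : Sig}

/-- A term is ground if it contains no variables; ground terms are the *names*. -/
def isGround : Term S → Prop
  | var _ => False
  | func _ ts => ∀ i, (ts i).isGround

def hasVar (x : ℕ) : Term S → Prop
  | var y => y = x
  | func _ ts => ∃ i, (ts i).hasVar x

/-- Application of a partial (name) substitution to a term. -/
def subst (β : ℕ → Option (Term S)) : Term S → Term S
  | var x => (β x).getD (var x)
  | func f ts => func f (fun i => (ts i).subst β)

/-- The function symbols occurring in a term. -/
def funcs : Term S → Set S.Func
  | var _ => ∅
  | func f ts => insert f (⋃ i, (ts i).funcs)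

/-- `t` is a name (ground term) over the set `F` of function symbols. -/
def isNameOf (F : Set S.Func) : Term S → Prop
  | var _ => False
  | func f ts => f ∈ F ∧ ∀ i, (ts i).isNameOf F

end Term

namespace Formula

variable {S : Sig}

/-- A formula is objective if it is 𝖫-free. -/
def isObjective : Formula S → Prop
  | atom _ _ => True
  | eq _ _ => True
  | not φ => φ.isObjective
  | and φ ψ => φ.isObjective ∧ ψ.isObjective
  | ex _ φ => φ.isObjective
  | box _ => False

def isGround : Formula S → Prop
  | atom _ ts => ∀ i, (ts i).isGround
  | eq t₁ t₂ => t₁.isGround ∧ t₂.isGround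
  | not φ => φ.isGround
  | and φ ψ => φ.isGround ∧ ψ.isGround
  | ex _ _ => False
  | box φ => φ.isGround

def isAtomic : Formula S → Prop
  | atom _ _ => True
  | eq _ _ => True
  | not _ => False
  | and _ _ => False
  | ex _ _ => False
  | box _ => False

/-- The modal operator 𝖫 occurs only applied to (objective) atomic formulas. -/
def boxAtomic : Formula S → Prop
  | atom _ _ => True
  | eq _ _ => True
  | not φ => φ.boxAtomic
  | and φ ψ => φ.boxAtomic ∧ ψ.boxAtomic
  | ex _ φ => φ.boxAtomic
  | box φ => φ.isAtomic

/-- Propositional formulas: built from 0-ary predicates only. -/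
def isPropositional : Formula S → Prop
  | atom p _ => S.arP p = 0
  | eq _ _ => False
  | not φ => φ.isPropositional
  | and φ ψ => φ.isPropositional ∧ ψ.isPropositional
  | ex _ _ => False
  | box _ => False

def freeIn (x : ℕ) : Formula S → Prop
  | atom _ ts => ∃ i, (ts i).hasVar x
  | eq t₁ t₂ => t₁.hasVar x ∨ t₂.hasVar x
  | not φ => φ.freeIn x
  | and φ ψ => φ.freeIn x ∨ ψ.freeIn x
  | ex y φ => x ≠ y ∧ φ.freeIn x
  | box φ => φ.freeIn x

/-- A formula is closed (a sentence) if it has no free variables. -/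
def closed (φ : Formula S) : Prop := ∀ x, ¬ φ.freeIn x

/-- Capture-avoiding application of a partial name substitution (values are ground). -/
def subst (β : ℕ → Option (Term S)) : Formula S → Formula S
  | atom p ts => atom p (fun i => (ts i).subst β)
  | eq t₁ t₂ => eq (t₁.subst β) (t₂.subst β)
  | not φ => not (φ.subst β)
  | and φ ψ => and (φ.subst β) (ψ.subst β)
  | ex y φ => ex y (φ.subst (fun z => if z = y then none else β z))
  | box φ => box (φ.subst β)

def funcs : Formula S → Set S.Func
  | atom _ ts => ⋃ i, (ts i).funcs
  | eq t₁ t₂ => t₁.funcs ∪ t₂.funcs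
  | not φ => φ.funcs
  | and φ ψ => φ.funcs ∪ ψ.funcs
  | ex _ φ => φ.funcs
  | box φ => φ.funcs

def preds : Formula S → Set S.Pred
  | atom p _ => {p}
  | eq _ _ => ∅
  | not φ => φ.preds
  | and φ ψ => φ.preds ∪ ψ.preds
  | ex _ φ => φ.preds
  | box φ => φ.preds

/-- `φ ∨ ψ` as an abbreviation: `¬(¬φ ∧ ¬ψ)`. -/
def or (φ ψ : Formula S) : Formula S := not (and (not φ) (not ψ))

/-- `φ ⊃ ψ` as an abbreviation: `¬(φ ∧ ¬ψ)`. -/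
def imp (φ ψ : Formula S) : Formula S := not (and φ (not ψ))

/-- `∀x.φ` as an abbreviation: `¬∃x.¬φ`. -/
def all (x : ℕ) (φ : Formula S) : Formula S := not (ex x (not φ))

end Formula

/-! ## Semantics -/

structure Interp (S : Sig) where
  U : Type
  nonempty : Nonempty U
  interpF : (f : S.Func) → (Fin (S.arF f) → U) → U
  interpP : (p : S.Pred) → (Fin (S.arP p) → U) → Prop

noncomputable def Interp.dflt {S : Sig} (w : Interp S) : w.U := Classical.choice w.nonempty

def Term.eval {S : Sig} (w : Interp S) (B : ℕ → w.U) : Term S → w.U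
  | Term.var x => B x
  | Term.func f ts => w.interpF f (fun i => (ts i).eval w B)

/-- Evaluation of a ground term (the assignment is irrelevant). -/
noncomputable def Term.evalG {S : Sig} (w : Interp S) (t : Term S) : w.U :=
  t.eval w (fun _ => w.dflt)

/-- An individual is named if some name (ground term) denotes it. -/
def IsNamed {S : Sig} (w : Interp S) (k : w.U) : Prop :=
  ∃ t : Term S, t.isGround ∧ Term.evalG w t = k

/-- A name substitution `β` is associated with the variable assignment `B`:
its domain is exactly the set of variables whose `B`-value is named, and
it assigns to each such variable a name denoting its `B`-value. -/
def Assoc {S : Sig} (w : Interp S) (B : ℕ → w.U) (β : ℕ → Option (Term S)) : Prop :=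
  ∀ x : ℕ,
    (IsNamed w (B x) → (β x).isSome) ∧
    (∀ t : Term S, β x = some t → t.isGround ∧ Term.evalG w t = B x)

/-- The two semantics: any-name (E) and all-name (A). -/
inductive Sem : Type
  | any
  | all

/-- Satisfaction of a formula in an autoepistemic interpretation `⟨w,Γ⟩`
under a variable assignment, for the any-name (E) resp. all-name (A) semantics. -/
def Sat {S : Sig} (X : Sem) (w : Interp S) (Γ : Set (Formula S)) :
    Formula S → (ℕ → w.U) → Prop
  | Formula.atom p ts, B => w.interpP p (fun i => (ts i).eval w B)
  | Formula.eq t₁ t₂, B => t₁.eval w B = t₂.eval w B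
  | Formula.not φ, B => ¬ Sat X w Γ φ B
  | Formula.and φ ψ, B => Sat X w Γ φ B ∧ Sat X w Γ ψ B
  | Formula.ex x φ, B => ∃ u : w.U, Sat X w Γ φ (Function.update B x u)
  | Formula.box φ, B =>
      match X with
      | Sem.any => ∃ β, Assoc w B β ∧ (φ.subst β).closed ∧ φ.subst β ∈ Γ
      | Sem.all => ∀ β, Assoc w B β → (φ.subst β).closed ∧ φ.subst β ∈ Γ

def ModelsF {S : Sig} (X : Sem) (w : Interp S) (Γ : Set (Formula S)) (φ : Formula S) : Prop :=
  ∀ B : ℕ → w.U, Sat X w Γ φ B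

def ModelsT {S : Sig} (X : Sem) (w : Interp S) (Γ Φ : Set (Formula S)) : Prop :=
  ∀ φ ∈ Φ, ModelsF X w Γ φ

/-- `Φ ⊨ˣ_Γ φ`. -/
def Entails {S : Sig} (X : Sem) (Φ Γ : Set (Formula S)) (φ : Formula S) : Prop :=
  ∀ w : Interp S, ModelsT X w Γ Φ → ModelsF X w Γ φ

/-- The standard names assumption: all names are interpreted distinctly
and every individual is named. -/
def SNA {S : Sig} (w : Interp S) : Prop :=
  (∀ t₁ t₂ : Term S, t₁.isGround → t₂.isGround → Term.evalG w t₁ = Term.evalG w t₂ → t₁ = t₂) ∧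
  (∀ k : w.U, IsNamed w k)

/-- Entailment restricted to interpretations satisfying the standard names assumption. -/
def EntailsSN {S : Sig} (X : Sem) (Φ Γ : Set (Formula S)) (φ : Formula S) : Prop :=
  ∀ w : Interp S, SNA w → ModelsT X w Γ Φ → ModelsF X w Γ φ

/-- `T` is a stableˣ expansion of `Φ`. -/
def StableExp {S : Sig} (X : Sem) (Φ T : Set (Formula S)) : Prop :=
  T = {φ | Entails X Φ T φ}

def objOf {S : Sig} (T : Set (Formula S)) : Set (Formula S) :=
  {φ ∈ T | φ.isObjective}

def ogOf {S : Sig} (T : Set (Formula S)) : Set (Formula S) :=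
  {φ ∈ T | φ.isObjective ∧ φ.isGround}

def ogaOf {S : Sig} (T : Set (Formula S)) : Set (Formula S) :=
  {φ ∈ T | φ.isObjective ∧ φ.isGround ∧ φ.isAtomic}

def Consistent {S : Sig} (T : Set (Formula S)) : Prop := T ≠ Set.univ

/-- `Φ₁ ≡ˣ Φ₂`: same stableˣ expansions. -/
def ExpEquiv {S : Sig} (X : Sem) (Φ₁ Φ₂ : Set (Formula S)) : Prop :=
  ∀ T, StableExp X Φ₁ T ↔ StableExp X Φ₂ T

/-- `Φ₁ ≡ˣ_γ Φ₂` for a selector `sel` (e.g. `ogaOf`): the stableˣ expansions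
correspond with respect to `sel`. -/
def ExpEquivSel {S : Sig} (X : Sem) (sel : Set (Formula S) → Set (Formula S))
    (Φ₁ Φ₂ : Set (Formula S)) : Prop :=
  (∀ T, StableExp X Φ₁ T → ∃ T', StableExp X Φ₂ T' ∧ sel T = sel T') ∧
  (∀ T', StableExp X Φ₂ T' → ∃ T, StableExp X Φ₁ T ∧ sel T = sel T')

/-- Autoepistemicˣ consequences of `Φ`. -/
def Cn {S : Sig} (X : Sem) (Φ : Set (Formula S)) : Set (Formula S) :=
  {φ | ∀ T, StableExp X Φ T → φ ∈ T}

def CnO {S : Sig} (X : Sem) (Φ : Set (Formula S)) : Set (Formula S) :=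
  {φ ∈ Cn X Φ | φ.isObjective}

def CnOg {S : Sig} (X : Sem) (Φ : Set (Formula S)) : Set (Formula S) :=
  {φ ∈ Cn X Φ | φ.isObjective ∧ φ.isGround}

/-! ## Logic programs -/

structure PAtom (S : Sig) where
  p : S.Pred
  args : Fin (S.arP p) → Term S

namespace PAtom

variable {S : Sig}

def toFormula (a : PAtom S) : Formula S := Formula.atom a.p a.args

def isGround (a : PAtom S) : Prop := ∀ i, (a.args i).isGround

def hasVar (x : ℕ) (a : PAtom S) : Prop := ∃ i, (a.args i).hasVar x

def substA (σ : ℕ → Term S) (a : PAtom S) : PAtom S :=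
  ⟨a.p, fun i => (a.args i).subst (fun x => some (σ x))⟩

def funcs (a : PAtom S) : Set S.Func := ⋃ i, (a.args i).funcs

end PAtom

/-- A (disjunctive) rule `h₁ | … | h_l ← b₁,…,b_m, not c₁,…,not c_n`,
together with a list of the variables occurring in it. -/
structure Rule (S : Sig) where
  head : List (PAtom S)
  pos : List (PAtom S)
  neg : List (PAtom S)
  vars : List ℕ

namespace Rule

variable {S : Sig}

def atoms (r : Rule S) : List (PAtom S) := r.head ++ r.pos ++ r.neg

def hasVar (x : ℕ) (r : Rule S) : Prop := ∃ a ∈ r.atoms, PAtom.hasVar x a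

/-- Well-formedness: at least one head atom, and `vars` lists all variables of the rule. -/
def wf (r : Rule S) : Prop := r.head ≠ [] ∧ ∀ x, r.hasVar x → x ∈ r.vars

def isNormal (r : Rule S) : Prop := r.head.length = 1

def isGround (r : Rule S) : Prop := (∀ a ∈ r.atoms, a.isGround) ∧ r.vars = []

def isSafe (r : Rule S) : Prop := ∀ x, r.hasVar x → ∃ a ∈ r.pos, PAtom.hasVar x a

def isPositive (r : Rule S) : Prop := r.neg = []

def applySubst (σ : ℕ → Term S) (r : Rule S) : Rule S :=
  ⟨r.head.map (PAtom.substA σ), r.pos.map (PAtom.substA σ), r.neg.map (PAtom.substA σ), []⟩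

end Rule

abbrev Program (S : Sig) := Set (Rule S)

def progWf {S : Sig} (P : Program S) : Prop := ∀ r ∈ P, r.wf
def progNormal {S : Sig} (P : Program S) : Prop := ∀ r ∈ P, r.isNormal
def progGround {S : Sig} (P : Program S) : Prop := ∀ r ∈ P, r.isGround
def progSafe {S : Sig} (P : Program S) : Prop := ∀ r ∈ P, r.isSafe
def progPositive {S : Sig} (P : Program S) : Prop := ∀ r ∈ P, r.isPositive

/-- The function symbols occurring in `P` (part of the signature `Σ_P`). -/
def progFuncs {S : Sig} (P : Program S) : Set S.Func :=
  {f | ∃ r ∈ P, ∃ a ∈ r.atoms, f ∈ a.funcs}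

/-- The predicate symbols occurring in `P` (part of the signature `Σ_P`). -/
def progPreds {S : Sig} (P : Program S) : Set S.Pred :=
  {q | ∃ r ∈ P, ∃ a ∈ r.atoms, a.p = q}

/-- The ambient signature is exactly the signature `Σ_P` of `P`. -/
def fullSig {S : Sig} (P : Program S) : Prop :=
  (∀ f : S.Func, f ∈ progFuncs P) ∧ (∀ q : S.Pred, q ∈ progPreds P)

/-- Standing assumption: `Σ_P` contains a 0-ary function symbol whenever it
has a predicate symbol of arity greater than 0. -/
def goodSig {S : Sig} (P : Program S) : Prop :=
  (∃ q ∈ progPreds P, 0 < S.arP q) → ∃ f ∈ progFuncs P, S.arF f = 0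

/-! ## Embeddings of logic programs into FO-AEL -/

def andAll {S : Sig} : Formula S → List (Formula S) → Formula S
  | φ, [] => φ
  | φ, ψ :: rest => andAll (Formula.and φ ψ) rest

def orAll {S : Sig} : Formula S → List (Formula S) → Formula S
  | φ, [] => φ
  | φ, ψ :: rest => orAll (Formula.or φ ψ) rest

/-- `impOf ants c` is `⋀ ants ⊃ c` (just `c` if there are no antecedents). -/
def impOf {S : Sig} : List (Formula S) → Formula S → Formula S
  | [], c => c
  | a :: rest, c => Formula.imp (andAll a rest) c

/-- Disjunction of a nonempty list (junk value on the empty list,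
which is excluded by rule well-formedness). -/
def disjOf {S : Sig} : List (Formula S) → Formula S
  | [] => Formula.eq (Term.var 0) (Term.var 0)
  | h :: rest => orAll h rest

/-- Universal uclosure over the listed variables. -/
def uclosure {S : Sig} (vs : List ℕ) (φ : Formula S) : Formula S :=
  vs.foldr Formula.all φ

def bodyHP {S : Sig} (r : Rule S) : List (Formula S) :=
  r.pos.map PAtom.toFormula ++ r.neg.map (fun c => Formula.not (Formula.box c.toFormula))

def bodyE {S : Sig} (r : Rule S) : List (Formula S) :=
  r.pos.map (fun b => Formula.and b.toFormula (Formula.box b.toFormula)) ++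
    r.neg.map (fun c => Formula.not (Formula.box c.toFormula))

/-- `τ_HP(r)` resp. `τ^∨_HP(r)`. -/
def embHP {S : Sig} (r : Rule S) : Formula S :=
  uclosure r.vars (impOf (bodyHP r) (disjOf (r.head.map PAtom.toFormula)))

/-- `τ_EB(r)` resp. `τ^∨_EB(r)`. -/
def embEB {S : Sig} (r : Rule S) : Formula S :=
  uclosure r.vars (impOf (bodyE r) (disjOf (r.head.map PAtom.toFormula)))

/-- `τ_EH(r)` resp. `τ^∨_EH(r)`. -/
def embEH {S : Sig} (r : Rule S) : Formula S :=
  uclosure r.vars (impOf (bodyE r)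
    (disjOf (r.head.map (fun h => Formula.and h.toFormula (Formula.box h.toFormula)))))

/-- The unique-names axioms `¬𝖫(t₁=t₂) ⊃ t₁≠t₂` for distinct names of `Σ_P`. -/
def UNAax {S : Sig} (P : Program S) : Set (Formula S) :=
  {φ | ∃ t₁ t₂ : Term S, t₁.isNameOf (progFuncs P) ∧ t₂.isNameOf (progFuncs P) ∧ t₁ ≠ t₂ ∧
        φ = Formula.imp (Formula.not (Formula.box (Formula.eq t₁ t₂)))
              (Formula.not (Formula.eq t₁ t₂))}

/-- The positive introspection axioms `α ⊃ 𝖫α` for objective ground atoms of `Σ_P`. -/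
def PIAax {S : Sig} (P : Program S) : Set (Formula S) :=
  {φ | ∃ a : PAtom S, a.p ∈ progPreds P ∧ (∀ i, (a.args i).isNameOf (progFuncs P)) ∧
        φ = Formula.imp a.toFormula (Formula.box a.toFormula)}

def ruleEmb {S : Sig} (emb : Rule S → Formula S) (P : Program S) : Set (Formula S) :=
  {φ | ∃ r ∈ P, φ = emb r}

def tauHP {S : Sig} (P : Program S) : Set (Formula S) := ruleEmb embHP P ∪ UNAax P
def tauEB {S : Sig} (P : Program S) : Set (Formula S) := ruleEmb embEB P ∪ UNAax P
def tauEH {S : Sig} (P : Program S) : Set (Formula S) := ruleEmb embEH P ∪ UNAax P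
def tauHPv {S : Sig} (P : Program S) : Set (Formula S) := ruleEmb embHP P ∪ PIAax P ∪ UNAax P
def tauEBv {S : Sig} (P : Program S) : Set (Formula S) := ruleEmb embEB P ∪ PIAax P ∪ UNAax P
def tauEHv {S : Sig} (P : Program S) : Set (Formula S) := ruleEmb embEH P ∪ UNAax P
def tauHPminus {S : Sig} (P : Program S) : Set (Formula S) := ruleEmb embHP P
def tauEHvminus {S : Sig} (P : Program S) : Set (Formula S) := ruleEmb embEH P

/-! ## Grounding and stable models -/

/-- The grounding of `P`: all ground instantiations of rules of `P`
obtained by replacing variables with names of `Σ_P`. -/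
def grP {S : Sig} (P : Program S) : Program S :=
  {r' | ∃ r ∈ P, ∃ σ : ℕ → Term S,
        (∀ x, r.hasVar x → (σ x).isNameOf (progFuncs P)) ∧ r' = Rule.applySubst σ r}

/-- A Herbrand interpretation: a set of ground atomic formulas. -/
def HerbrandI {S : Sig} (M : Set (Formula S)) : Prop :=
  ∀ φ ∈ M, φ.isAtomic ∧ φ.isGround

/-- `M` is a Herbrand model of the positive ground program `Q` (relative to the
names of `Σ_P`): rules are satisfied and `t = t ∈ M` for every name `t`. -/
def HerbrandModelOf {S : Sig} (P Q : Program S) (M : Set (Formula S)) : Prop :=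
  HerbrandI M ∧
  (∀ r ∈ Q, (∀ b ∈ r.pos, PAtom.toFormula b ∈ M) → ∃ h ∈ r.head, PAtom.toFormula h ∈ M) ∧
  (∀ t : Term S, t.isNameOf (progFuncs P) → Formula.eq t t ∈ M)

/-- The Gelfond–Lifschitz reduct of `gr(P)` with respect to `M`. -/
def reduct {S : Sig} (P : Program S) (M : Set (Formula S)) : Program S :=
  {r' | ∃ r ∈ grP P, (∀ c ∈ r.neg, PAtom.toFormula c ∉ M) ∧
        r' = ⟨r.head, r.pos, [], r.vars⟩}

/-- `M` is a stable model of `P`: a minimal Herbrand model of the reduct of `gr(P)` w.r.t. `M`. -/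
def isStableModel {S : Sig} (P : Program S) (M : Set (Formula S)) : Prop :=
  HerbrandModelOf P (reduct P M) M ∧
  ∀ M', M' ⊆ M → HerbrandModelOf P (reduct P M) M' → M' = M

/-! ## First-order theories and classes thereof -/

/-- An FO theory: a set of objective sentences. -/
def FOTheory {S : Sig} (Φ : Set (Formula S)) : Prop :=
  ∀ φ ∈ Φ, φ.isObjective ∧ φ.closed

def theoryFuncs {S : Sig} (Φ : Set (Formula S)) : Set S.Func := {f | ∃ φ ∈ Φ, f ∈ φ.funcs}
def theoryPreds {S : Sig} (Φ : Set (Formula S)) : Set S.Pred := {q | ∃ φ ∈ Φ, q ∈ φ.preds}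

/-- The ambient signature is exactly the union of the signatures of `Φ` and `P`. -/
def CoverSig {S : Sig} (Φ : Set (Formula S)) (P : Program S) : Prop :=
  (∀ f : S.Func, f ∈ theoryFuncs Φ ∪ progFuncs P) ∧
  (∀ q : S.Pred, q ∈ theoryPreds Φ ∪ progPreds P)

def exClosure {S : Sig} (ys : List ℕ) (φ : Formula S) : Formula S := ys.foldr Formula.ex φ

/-- A Horn sentence `(∀)(b₁ ∧ … ∧ b_n ⊃ h)` with atomic `b_i`, `h`
(the consequent `h` may be absent). -/
def isHornSentence {S : Sig} (φ : Formula S) : Prop :=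
  ∃ (vs : List ℕ) (bs : List (Formula S)),
    (∀ b ∈ bs, b.isAtomic) ∧
    ((∃ h : Formula S, h.isAtomic ∧ φ = uclosure vs (impOf bs h)) ∨
     (∃ b rest, bs = b :: rest ∧ φ = uclosure vs (Formula.not (andAll b rest))))

def HornTheory {S : Sig} (Φ : Set (Formula S)) : Prop :=
  FOTheory Φ ∧ ∀ φ ∈ Φ, isHornSentence φ

/-- A generalized Horn sentence `(∀)(b₁ ∧ … ∧ b_n ⊃ ∃ȳ.h)` with atomic `b_i`, `h`,
the variables `ȳ` occurring only in `h` (the consequent may be absent). -/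
def isGHornSentence {S : Sig} (φ : Formula S) : Prop :=
  ∃ (vs : List ℕ) (bs : List (Formula S)),
    (∀ b ∈ bs, b.isAtomic) ∧
    ((∃ (ys : List ℕ) (h : Formula S), h.isAtomic ∧
        (∀ y ∈ ys, ∀ b ∈ bs, ¬ b.freeIn y) ∧
        φ = uclosure vs (impOf bs (exClosure ys h))) ∨
     (∃ b rest, bs = b :: rest ∧ φ = uclosure vs (Formula.not (andAll b rest))))

def GHornTheory {S : Sig} (Φ : Set (Formula S)) : Prop :=
  FOTheory Φ ∧ ∀ φ ∈ Φ, isGHornSentence φ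

def PropTheory {S : Sig} (Φ : Set (Formula S)) : Prop :=
  FOTheory Φ ∧ ∀ φ ∈ Φ, φ.isPropositional

/-- The six embeddings `τ_HP, τ_EB, τ_EH, τ^∨_HP, τ^∨_EB, τ^∨_EH`. -/
inductive EmbKind : Type
  | hp | eb | eh | hpv | ebv | ehv

def EmbKind.toTau {S : Sig} : EmbKind → Program S → Set (Formula S)
  | .hp => tauHP
  | .eb => tauEB
  | .eh => tauEH
  | .hpv => tauHPv
  | .ebv => tauEBv
  | .ehv => tauEHv

/-- The stated basic relations between objective ground consequence sets:
`Cn_og(EH∨) = Cn_og(EH) = Cn_og(EB)`, `Cn_og(EB∨) = Cn_og(HP∨)`,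
`Cn_og(EB) ⊆ Cn_og(HP)`, and `Cn_og(HP) ⊆ Cn_og(HP∨)`. -/
def EmbRel : EmbKind → EmbKind → Prop := fun i j =>
  (i, j) ∈ ([(.ehv, .eh), (.eh, .ehv), (.eh, .eb), (.eb, .eh),
             (.ebv, .hpv), (.hpv, .ebv), (.eb, .hp), (.hp, .hpv)] :
            List (EmbKind × EmbKind))

namespace AEL
open Classical

variable {S : Sig}

theorem term_subst_ground (β : ℕ → Option (Term S)) (t : Term S) (h : t.isGround) :
    t.subst β = t := by
  induction t with
  | var x => exact h.elim
  | func f ts ih =>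
    simp only [Term.subst]
    congr 1
    funext i
    exact ih i (h i)

theorem term_ground_no_var (t : Term S) (h : t.isGround) (x : ℕ) : ¬ t.hasVar x := by
  induction t with
  | var x => exact h.elim
  | func f ts ih =>
    rintro ⟨i, hi⟩
    exact ih i (h i) hi

theorem term_ground_of_no_var (t : Term S) (h : ∀ x, ¬ t.hasVar x) : t.isGround := by
  induction t with
  | var x => exact h x rfl
  | func f ts ih => exact fun i => ih i (fun x hx => h x ⟨i, hx⟩)

theorem term_eval_ground (w : Interp S) (B B' : ℕ → w.U) (t : Term S) (h : t.isGround) :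
    t.eval w B = t.eval w B' := by
  induction t with
  | var x => exact h.elim
  | func f ts ih =>
    simp only [Term.eval]
    congr 1
    funext i
    exact ih i (h i)

theorem term_subst_isGround (β : ℕ → Option (Term S)) (t : Term S)
    (h : ∀ x, t.hasVar x → ∃ s, β x = some s ∧ s.isGround) : (t.subst β).isGround := by
  induction t with
  | var x =>
    obtain ⟨s, hs, hg⟩ := h x rfl
    simp only [Term.subst, hs]
    exact hg
  | func f ts ih => exact fun i => ih i (fun x hx => h x ⟨i, hx⟩)

theorem term_subst_eval (w : Interp S) (B : ℕ → w.U) (β : ℕ → Option (Term S)) (t : Term S)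
    (h : ∀ x, t.hasVar x → ∃ s, β x = some s ∧ Term.evalG w s = B x) :
    Term.evalG w (t.subst β) = t.eval w B := by
  induction t with
  | var x =>
    obtain ⟨s, hs, hg⟩ := h x rfl
    simp only [Term.subst, hs]
    exact hg
  | func f ts ih =>
    simp only [Term.subst, Term.evalG, Term.eval]
    congr 1
    funext i
    exact ih i (fun x hx => h x ⟨i, hx⟩)

theorem isNameOf_iff (F : Set S.Func) (hF : ∀ f, f ∈ F) (t : Term S) :
    t.isNameOf F ↔ t.isGround := by
  induction t with
  | var x => exact Iff.rfl
  | func f ts ih =>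
    simp only [Term.isNameOf, Term.isGround]
    exact ⟨fun h i => (ih i).1 (h.2 i), fun h => ⟨hF f, fun i => (ih i).2 (h i)⟩⟩

theorem atom_ext (a a' : PAtom S) (h : a.toFormula = a'.toFormula) : a = a' := by
  cases a; cases a'
  simp only [PAtom.toFormula, Formula.atom.injEq] at h
  obtain ⟨rfl, h⟩ := h
  cases h
  rfl

theorem ground_closed (a : PAtom S) (h : a.isGround) : a.toFormula.closed := by
  rintro x ⟨i, hi⟩
  exact term_ground_no_var _ (h i) x hi

theorem exists_assoc (w : Interp S) (B : ℕ → w.U) : ∃ β, Assoc w B β := by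
  refine ⟨fun x => if h : IsNamed w (B x) then some h.choose else none, fun x => ⟨?_, ?_⟩⟩
  · intro h; simp [h]
  · intro t ht
    by_cases h : IsNamed w (B x)
    · simp only [h, dite_true, Option.some.injEq] at ht
      rw [← ht]; exact h.choose_spec
    · simp [h] at ht

/-- If all associated substitutions agree on membership, the box is determined. -/
theorem sat_box_of (X : Sem) (w : Interp S) (Γ : Set (Formula S)) (B : ℕ → w.U) (φ : Formula S)
    (Q : Prop) (h : ∀ β, Assoc w B β → (((φ.subst β).closed ∧ φ.subst β ∈ Γ) ↔ Q)) :
    Sat X w Γ (Formula.box φ) B ↔ Q := by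
  obtain ⟨β₀, h₀⟩ := exists_assoc w B
  cases X
  · constructor
    · rintro ⟨β, hβ, h1⟩
      exact (h β hβ).1 h1
    · intro hq
      exact ⟨β₀, h₀, (h β₀ h₀).2 hq⟩
  · constructor
    · intro H
      exact (h β₀ h₀).1 (H β₀ h₀)
    · intro hq β hβ
      exact (h β hβ).2 hq

def evalArgs (w : Interp S) (a : PAtom S) : Prop :=
  w.interpP a.p (fun i => Term.evalG w (a.args i))

def val (w : Interp S) : Set (PAtom S) := {a | a.isGround ∧ evalArgs w a}

def Respects (w : Interp S) (Γ : Set (Formula S)) : Prop :=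
  ∀ (p : S.Pred) (ts ts' : Fin (S.arP p) → Term S), (∀ i, (ts i).isGround) →
    (∀ i, (ts' i).isGround) → (∀ i, Term.evalG w (ts i) = Term.evalG w (ts' i)) →
    Formula.atom p ts ∈ Γ → Formula.atom p ts' ∈ Γ

theorem sat_box_atom (X : Sem) (w : Interp S) (Γ : Set (Formula S)) (hR : Respects w Γ)
    (B : ℕ → w.U) (σ : ℕ → Term S) (a : PAtom S)
    (hσ : ∀ x, a.hasVar x → (σ x).isGround ∧ Term.evalG w (σ x) = B x) :
    Sat X w Γ (Formula.box a.toFormula) B ↔ (a.substA σ).toFormula ∈ Γ := by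
  apply sat_box_of
  intro β hβ
  have hβ' : ∀ x, a.hasVar x → ∃ s, β x = some s ∧ s.isGround ∧ Term.evalG w s = B x := by
    intro x hx
    obtain ⟨h1, h2⟩ := hσ x hx
    obtain ⟨h3, h4⟩ := hβ x
    have := h3 ⟨σ x, h1, h2⟩
    obtain ⟨s, hs⟩ := Option.isSome_iff_exists.1 this
    exact ⟨s, hs, h4 s hs⟩
  have g1 : ∀ i, ((a.args i).subst β).isGround := fun i =>
    term_subst_isGround _ _ (fun x hx => by
      obtain ⟨s, h1, h2, _⟩ := hβ' x ⟨i, hx⟩; exact ⟨s, h1, h2⟩)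
  have g2 : ∀ i, ((a.args i).subst (fun x => some (σ x))).isGround := fun i =>
    term_subst_isGround _ _ (fun x hx => ⟨σ x, rfl, (hσ x ⟨i, hx⟩).1⟩)
  have e1 : ∀ i, Term.evalG w ((a.args i).subst β) = (a.args i).eval w B := fun i =>
    term_subst_eval _ _ _ _ (fun x hx => by
      obtain ⟨s, h1, _, h2⟩ := hβ' x ⟨i, hx⟩; exact ⟨s, h1, h2⟩)
  have e2 : ∀ i, Term.evalG w ((a.args i).subst (fun x => some (σ x))) = (a.args i).eval w B :=
    fun i => term_subst_eval _ _ _ _ (fun x hx => ⟨σ x, rfl, (hσ x ⟨i, hx⟩).2⟩)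
  constructor
  · rintro ⟨_, h⟩
    exact hR a.p _ _ g1 g2 (fun i => (e1 i).trans (e2 i).symm) h
  · intro h
    exact ⟨ground_closed ⟨a.p, fun i => (a.args i).subst β⟩ g1,
      hR a.p _ _ g2 g1 (fun i => (e2 i).trans (e1 i).symm) h⟩

theorem sat_box_eq (X : Sem) (w : Interp S) (Γ : Set (Formula S))
    (B : ℕ → w.U) (t t' : Term S) (h : t.isGround) (h' : t'.isGround) :
    Sat X w Γ (Formula.box (Formula.eq t t')) B ↔ Formula.eq t t' ∈ Γ := by
  apply sat_box_of
  intro β hβ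
  simp only [Formula.subst, term_subst_ground β t h, term_subst_ground β t' h']
  refine ⟨fun h => h.2, fun h1 => ⟨?_, h1⟩⟩
  rintro x (hx | hx)
  · exact term_ground_no_var _ h x hx
  · exact term_ground_no_var _ h' x hx

theorem sat_atom (X : Sem) (w : Interp S) (Γ : Set (Formula S))
    (B : ℕ → w.U) (σ : ℕ → Term S) (a : PAtom S)
    (hσ : ∀ x, a.hasVar x → (σ x).isGround ∧ Term.evalG w (σ x) = B x) :
    Sat X w Γ a.toFormula B ↔ a.substA σ ∈ val w := by
  have g2 : ∀ i, ((a.args i).subst (fun x => some (σ x))).isGround := fun i =>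
    term_subst_isGround _ _ (fun x hx => ⟨σ x, rfl, (hσ x ⟨i, hx⟩).1⟩)
  have e2 : ∀ i, Term.evalG w ((a.args i).subst (fun x => some (σ x))) = (a.args i).eval w B :=
    fun i => term_subst_eval _ _ _ _ (fun x hx => ⟨σ x, rfl, (hσ x ⟨i, hx⟩).2⟩)
  have : Sat X w Γ a.toFormula B ↔ evalArgs w (a.substA σ) := by
    simp only [PAtom.toFormula, Sat, evalArgs, PAtom.substA, e2]
  rw [this]
  exact ⟨fun h => ⟨g2, h⟩, fun h => h.2⟩

/-! ### general embedding -/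

def litG (e : Bool) (b : PAtom S) : Formula S :=
  match e with
  | true => Formula.and b.toFormula (Formula.box b.toFormula)
  | false => b.toFormula

def bodyG (e : Bool) (r : Rule S) : List (Formula S) :=
  r.pos.map (litG e) ++ r.neg.map (fun c => Formula.not (Formula.box c.toFormula))

def embG (e h : Bool) (r : Rule S) : Formula S :=
  uclosure r.vars (impOf (bodyG e r) (disjOf (r.head.map (litG h))))

def tauG (e h v : Bool) (P : Program S) : Set (Formula S) :=
  ruleEmb (embG e h) P ∪ (if v then PIAax P else ∅) ∪ UNAax P

theorem tauHP_eq (P : Program S) : tauHP P = tauG false false false P := by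
  simp [tauG]; rfl
theorem tauEB_eq (P : Program S) : tauEB P = tauG true false false P := by
  simp [tauG]; rfl
theorem tauEH_eq (P : Program S) : tauEH P = tauG true true false P := by
  simp [tauG]; rfl
theorem tauHPv_eq (P : Program S) : tauHPv P = tauG false false true P := by
  simp [tauG]; rfl
theorem tauEBv_eq (P : Program S) : tauEBv P = tauG true false true P := by
  simp [tauG]; rfl

theorem sat_imp (X : Sem) (w : Interp S) (Γ : Set (Formula S)) (B : ℕ → w.U) (φ ψ : Formula S) :
    Sat X w Γ (Formula.imp φ ψ) B ↔ (Sat X w Γ φ B → Sat X w Γ ψ B) := by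
  simp only [Formula.imp, Sat]; tauto

theorem sat_andAll (X : Sem) (w : Interp S) (Γ : Set (Formula S)) (B : ℕ → w.U)
    (l : List (Formula S)) : ∀ φ, Sat X w Γ (andAll φ l) B ↔ (Sat X w Γ φ B ∧ ∀ a ∈ l, Sat X w Γ a B) := by
  induction l with
  | nil => intro φ; simp [andAll]
  | cons a l ih => intro φ; simp [andAll, ih, Sat, and_assoc]

theorem sat_impOf (X : Sem) (w : Interp S) (Γ : Set (Formula S)) (B : ℕ → w.U)
    (l : List (Formula S)) (c : Formula S) :
    Sat X w Γ (impOf l c) B ↔ ((∀ a ∈ l, Sat X w Γ a B) → Sat X w Γ c B) := by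
  cases l with
  | nil => simp [impOf]
  | cons a l => simp [impOf, sat_imp, sat_andAll]

theorem models_uclosure (X : Sem) (w : Interp S) (Γ : Set (Formula S)) (vs : List ℕ)
    (φ : Formula S) : ModelsF X w Γ (uclosure vs φ) ↔ ModelsF X w Γ φ := by
  induction vs with
  | nil => exact Iff.rfl
  | cons x vs ih =>
    rw [← ih]
    simp only [ModelsF, uclosure, List.foldr, Formula.all, Sat, not_exists, not_not]
    constructor
    · intro h B
      have := h B (B x)
      rwa [Function.update_eq_self] at this
    · intro h B u
      exact h _

def HModel (e h v : Bool) (P : Program S) (G M : Set (PAtom S)) : Prop :=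
  (∀ a ∈ M, a.isGround) ∧
  (∀ r ∈ P, ∀ σ : ℕ → Term S, (∀ x, r.hasVar x → (σ x).isGround) →
    (∀ b ∈ r.pos, b.substA σ ∈ M ∧ (e = true → b.substA σ ∈ G)) →
    (∀ c ∈ r.neg, c.substA σ ∉ G) →
    ∀ d ∈ r.head, d.substA σ ∈ M ∧ (h = true → d.substA σ ∈ G)) ∧
  (v = true → M ⊆ G)

def GOf (Γ : Set (Formula S)) : Set (PAtom S) := {a | a.isGround ∧ a.toFormula ∈ Γ}

theorem substA_ground (a : PAtom S) (σ : ℕ → Term S) (h : ∀ x, a.hasVar x → (σ x).isGround) :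
    (a.substA σ).isGround := fun i =>
  term_subst_isGround _ _ (fun x hx => ⟨σ x, rfl, h x ⟨i, hx⟩⟩)

theorem substA_of_ground (a : PAtom S) (σ : ℕ → Term S) (h : a.isGround) : a.substA σ = a := by
  cases a with
  | mk p args =>
    simp only [PAtom.substA]
    congr 1
    funext i
    exact term_subst_ground _ _ (h i)

theorem sat_lit (X : Sem) (w : Interp S) (Γ : Set (Formula S)) (hR : Respects w Γ)
    (B : ℕ → w.U) (σ : ℕ → Term S) (a : PAtom S) (e : Bool)
    (hσ : ∀ x, a.hasVar x → (σ x).isGround ∧ Term.evalG w (σ x) = B x) :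
    Sat X w Γ (litG e a) B ↔ (a.substA σ ∈ val w ∧ (e = true → a.substA σ ∈ GOf Γ)) := by
  have hg := substA_ground a σ (fun x hx => (hσ x hx).1)
  cases e
  · simp [litG, sat_atom X w Γ B σ a hσ]
  · show Sat X w Γ a.toFormula B ∧ Sat X w Γ (Formula.box a.toFormula) B ↔ _
    rw [sat_atom X w Γ B σ a hσ, sat_box_atom X w Γ hR B σ a hσ]
    simp [GOf, hg]

theorem sat_rule (X : Sem) (w : Interp S) (Γ : Set (Formula S)) (hR : Respects w Γ)
    (B : ℕ → w.U) (σ : ℕ → Term S) (r : Rule S) (hn : r.isNormal) (e h : Bool)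
    (hσ : ∀ x, r.hasVar x → (σ x).isGround ∧ Term.evalG w (σ x) = B x) :
    Sat X w Γ (impOf (bodyG e r) (disjOf (r.head.map (litG h)))) B ↔
    ((∀ b ∈ r.pos, b.substA σ ∈ val w ∧ (e = true → b.substA σ ∈ GOf Γ)) →
    (∀ c ∈ r.neg, c.substA σ ∉ GOf Γ) →
    ∀ d ∈ r.head, d.substA σ ∈ val w ∧ (h = true → d.substA σ ∈ GOf Γ)) := by
  have hv : ∀ a ∈ r.atoms, ∀ x, a.hasVar x → (σ x).isGround ∧ Term.evalG w (σ x) = B x :=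
    fun a ha x hx => hσ x ⟨a, ha, hx⟩
  obtain ⟨d, hd⟩ := List.length_eq_one_iff.1 hn
  have h1 : Sat X w Γ (disjOf (r.head.map (litG h))) B ↔
      ∀ d ∈ r.head, d.substA σ ∈ val w ∧ (h = true → d.substA σ ∈ GOf Γ) := by
    have := hv d (by simp [Rule.atoms, hd])
    simp [hd, disjOf, orAll, sat_lit X w Γ hR B σ d h this]
  have h2 : (∀ a ∈ bodyG e r, Sat X w Γ a B) ↔
      ((∀ b ∈ r.pos, b.substA σ ∈ val w ∧ (e = true → b.substA σ ∈ GOf Γ)) ∧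
        (∀ c ∈ r.neg, c.substA σ ∉ GOf Γ)) := by
    simp only [bodyG, List.mem_append, or_imp, forall_and, List.mem_map, forall_exists_index,
      and_imp, forall_apply_eq_imp_iff₂]
    refine and_congr ?_ ?_
    · rw [← forall₂_and]
      refine forall₂_congr fun b hb => ?_
      rw [sat_lit X w Γ hR B σ b e (hv b (by simp [Rule.atoms, hb]))]
    · refine forall₂_congr fun c hc => ?_
      have hcv := hv c (by simp [Rule.atoms, hc])
      have hg := substA_ground c σ (fun x hx => (hcv x hx).1)
      show ¬ Sat X w Γ (Formula.box c.toFormula) B ↔ _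
      rw [sat_box_atom X w Γ hR B σ c hcv]
      simp [GOf, hg]
  rw [sat_impOf, h1, h2, and_imp]

theorem sat_pia (X : Sem) (w : Interp S) (Γ : Set (Formula S)) (hR : Respects w Γ)
    (B : ℕ → w.U) (a : PAtom S) (ha : a.isGround) :
    Sat X w Γ (Formula.imp a.toFormula (Formula.box a.toFormula)) B ↔
      (a ∈ val w → a ∈ GOf Γ) := by
  have hv : ∀ x, a.hasVar x → ((Term.var x : Term S)).isGround ∧
      Term.evalG w (Term.var x) = B x := by
    rintro x ⟨i, hi⟩
    exact (term_ground_no_var _ (ha i) x hi).elim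
  rw [sat_imp, sat_atom X w Γ B Term.var a hv, sat_box_atom X w Γ hR B Term.var a hv,
    substA_of_ground _ _ ha]
  simp [GOf, ha]

/-- From a structure to a Herbrand valuation. -/
theorem model_to_val (X : Sem) (e h v : Bool) (P : Program S) (hn : progNormal P) (hf : fullSig P)
    (w : Interp S) (Γ : Set (Formula S)) (hR : Respects w Γ)
    (hm : ModelsT X w Γ (tauG e h v P)) : HModel e h v P (GOf Γ) (val w) := by
  refine ⟨fun a ha => ha.1, ?_, ?_⟩
  · intro r hr σ hσ
    have := hm (embG e h r) (Or.inl (Or.inl ⟨r, hr, rfl⟩))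
    rw [embG, models_uclosure] at this
    exact (sat_rule X w Γ hR (fun x => Term.evalG w (σ x)) σ r (hn r hr) e h
      (fun x hx => ⟨hσ x hx, rfl⟩)).1 (this _)
  · rintro rfl a ha
    have := hm _ (Or.inl (Or.inr (by
      simp only [if_true]
      exact ⟨a, hf.2 _, fun i => (isNameOf_iff _ hf.1 _).2 (ha.1 i), rfl⟩)))
    exact (sat_pia X w Γ hR (fun _ => w.dflt) a ha.1).1 (this _) ha

theorem model_una (X : Sem) (e h v : Bool) (P : Program S) (hf : fullSig P)
    (w : Interp S) (Γ : Set (Formula S))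
    (hm : ModelsT X w Γ (tauG e h v P)) (t t' : Term S) (ht : t.isGround) (ht' : t'.isGround)
    (he : Term.evalG w t = Term.evalG w t') : t = t' ∨ Formula.eq t t' ∈ Γ := by
  by_cases h1 : t = t'
  · exact Or.inl h1
  right
  have := hm _ (Or.inr ⟨t, t', (isNameOf_iff _ hf.1 _).2 ht, (isNameOf_iff _ hf.1 _).2 ht', h1, rfl⟩)
    (fun _ => w.dflt)
  rw [sat_imp] at this
  by_contra hc
  refine this ?_ he
  simp only [Sat]
  exact (not_congr (sat_box_eq X w Γ _ t t' ht ht')).2 hc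

/-! ### Herbrand structures -/

def HU (S : Sig) : Type := {t : Term S // t.isGround ∨ ∀ s : Term S, ¬ s.isGround}

def HInt (M : Set (PAtom S)) : Interp S where
  U := HU S
  nonempty := by
    by_cases h : ∃ s : Term S, s.isGround
    · obtain ⟨s, hs⟩ := h
      exact ⟨⟨s, Or.inl hs⟩⟩
    · exact ⟨⟨Term.var 0, Or.inr (not_exists.1 h)⟩⟩
  interpF := fun f ts => ⟨Term.func f (fun i => (ts i).1), by
    by_cases h : ∀ s : Term S, ¬ s.isGround
    · exact Or.inr h
    · exact Or.inl fun i => (ts i).2.resolve_right h⟩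
  interpP := fun p ts => (⟨p, fun i => (ts i).1⟩ : PAtom S) ∈ M

theorem HInt_eval (M : Set (PAtom S)) (B : ℕ → (HInt M).U) (t : Term S) (ht : t.isGround) :
    (t.eval (HInt M) B : HU S).1 = t := by
  induction t with
  | var x => exact ht.elim
  | func f ts ih =>
    simp only [Term.eval, HInt]
    congr 1
    funext i
    exact ih i (ht i)

theorem HInt_evalG (M : Set (PAtom S)) (t : Term S) (ht : t.isGround) :
    (Term.evalG (HInt M) t : HU S).1 = t := HInt_eval M _ t ht

def Triv (w : Interp S) : Prop :=
  ∀ t t' : Term S, t.isGround → t'.isGround → Term.evalG w t = Term.evalG w t' → t = t'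

theorem HInt_triv (M : Set (PAtom S)) : Triv (HInt M) := by
  intro t t' ht ht' h
  rw [← HInt_evalG M t ht, ← HInt_evalG M t' ht', h]

theorem triv_respects (w : Interp S) (h : Triv w) (Γ : Set (Formula S)) : Respects w Γ := by
  intro p ts ts' h1 h2 h3 h4
  have : ts = ts' := funext fun i => h _ _ (h1 i) (h2 i) (h3 i)
  rwa [← this]

theorem HInt_val (M : Set (PAtom S)) (hM : ∀ a ∈ M, a.isGround) : val (HInt M) = M := by
  ext a
  have key : a.isGround → (evalArgs (HInt M) a ↔ a ∈ M) := by
    intro ha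
    cases a with
    | mk p args =>
      show (⟨p, fun i => (Term.evalG (HInt M) (args i) : HU S).1⟩ : PAtom S) ∈ M ↔ _
      have : (fun i => (Term.evalG (HInt M) (args i) : HU S).1) = args :=
        funext fun i => HInt_evalG M _ (ha i)
      rw [this]
  exact ⟨fun h => (key h.1).1 h.2, fun h => ⟨hM a h, (key (hM a h)).2 h⟩⟩

theorem ground_of_const (P : Program S) (hf : fullSig P) (hg : goodSig P)
    (hs : ∀ s : Term S, ¬ s.isGround) (a : PAtom S) (x : ℕ) : ¬ a.hasVar x := by
  rintro ⟨i, _⟩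
  obtain ⟨f, _, h0⟩ := hg ⟨a.p, hf.2 _, i.pos⟩
  exact hs (Term.func f (fun i => (Fin.cast h0 i).elim0)) (fun i => (Fin.cast h0 i).elim0)

theorem HInt_models (X : Sem) (e h v : Bool) (P : Program S) (hn : progNormal P) (hf : fullSig P)
    (hg : goodSig P) (Γ : Set (Formula S)) (M : Set (PAtom S))
    (hm : HModel e h v P (GOf Γ) M) : ModelsT X (HInt M) Γ (tauG e h v P) := by
  have hT := HInt_triv M
  have hR := triv_respects _ hT Γ
  have hv := HInt_val M hm.1
  rintro φ ((⟨r, hr, rfl⟩ | hφ) | ⟨t, t', ht, ht', hne, rfl⟩)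
  · rw [embG, models_uclosure]
    intro B
    have hσ : ∀ x, r.hasVar x → ((B x : HU S).1).isGround ∧
        Term.evalG (HInt M) (B x : HU S).1 = B x := by
      rintro x ⟨a, _, hx⟩
      have hgr : ((B x : HU S).1).isGround :=
        (B x : HU S).2.resolve_right (fun hs => ground_of_const P hf hg hs a x hx)
      exact ⟨hgr, Subtype.ext (HInt_evalG M _ hgr)⟩
    rw [sat_rule X (HInt M) Γ hR B (fun x => (B x : HU S).1) r (hn r hr) e h hσ, hv]
    exact hm.2.1 r hr _ (fun x hx => (hσ x hx).1)
  · cases v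
    · simp at hφ
    · simp only [if_true] at hφ
      obtain ⟨a, _, ha, rfl⟩ := hφ
      intro B
      rw [sat_pia X _ Γ hR B a (fun i => (isNameOf_iff _ hf.1 _).1 (ha i)), hv]
      exact fun h => hm.2.2 rfl h
  · intro B
    rw [isNameOf_iff _ hf.1] at ht ht'
    rw [sat_imp]
    intro _ he
    apply hne
    rw [← HInt_eval M B t ht, ← HInt_eval M B t' ht']
    exact congrArg Subtype.val he

def hsat (M : Set (PAtom S)) : Formula S → Prop
  | Formula.atom p ts => (⟨p, ts⟩ : PAtom S) ∈ M
  | Formula.eq t t' => t = t'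
  | Formula.not φ => ¬ hsat M φ
  | Formula.and φ ψ => hsat M φ ∧ hsat M ψ
  | Formula.ex _ _ => False
  | Formula.box _ => False

theorem sat_hsat (X : Sem) (w : Interp S) (hT : Triv w) (Γ : Set (Formula S)) (B : ℕ → w.U)
    (φ : Formula S) (ho : φ.isObjective) (hg : φ.isGround) :
    Sat X w Γ φ B ↔ hsat (val w) φ := by
  induction φ with
  | atom p ts =>
    have e : ∀ i, (ts i).eval w B = Term.evalG w (ts i) := fun i => term_eval_ground _ _ _ _ (hg i)
    simp only [Sat, hsat, val, evalArgs, Set.mem_setOf_eq, e]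
    exact ⟨fun h => ⟨hg, h⟩, fun h => h.2⟩
  | eq t t' =>
    simp only [Sat, hsat]
    rw [term_eval_ground w B (fun _ => w.dflt) t hg.1, term_eval_ground w B (fun _ => w.dflt) t' hg.2]
    exact ⟨hT t t' hg.1 hg.2, fun h => by rw [h]⟩
  | not φ ih => simp only [Sat, hsat]; rw [ih ho hg]
  | and φ ψ ih1 ih2 => simp only [Sat, hsat]; rw [ih1 ho.1 hg.1, ih2 ho.2 hg.2]
  | ex x φ ih => exact hg.elim
  | box φ ih => exact ho.elim

theorem toF_og (a : PAtom S) (ha : a.isGround) : a.toFormula.isObjective ∧ a.toFormula.isGround :=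
  ⟨trivial, ha⟩

def HStable (e h v : Bool) (P : Program S) (G : Set (PAtom S)) : Prop :=
  G = {a | a.isGround ∧ ∀ M, HModel e h v P G M → a ∈ M}

theorem stable_og (X : Sem) (e h v : Bool) (P : Program S) (hn : progNormal P) (hf : fullSig P)
    (hg : goodSig P) (T : Set (Formula S)) (hT : StableExp X (tauG e h v P) T)
    (φ : Formula S) (ho : φ.isObjective) (hgr : φ.isGround) :
    φ ∈ T ↔ ∀ M, HModel e h v P (GOf T) M → hsat M φ := by
  have mem : ∀ ψ, ψ ∈ T ↔ Entails X (tauG e h v P) T ψ := by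
    intro ψ
    conv_lhs => rw [show T = _ from hT]
    rfl
  constructor
  · intro h M hM
    have h1 := (mem φ).1 h (HInt M) (HInt_models X e _ v P hn hf hg T M hM) (fun _ => (HInt M).dflt)
    rw [sat_hsat X _ (HInt_triv M) T _ φ ho hgr, HInt_val M hM.1] at h1
    exact h1
  · intro H
    rw [mem]
    intro w hw B
    have heq : ∀ t t', Formula.eq t t' ∈ T → t.isGround → t'.isGround →
        Term.evalG w t = Term.evalG w t' := by
      intro t t' h _ _
      exact (mem _).1 h w hw (fun _ => w.dflt)
    have hR : Respects w T := by
      intro p ts ts' h1 h2 h3 h4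
      rw [mem] at h4 ⊢
      intro w' hw' B'
      have h5 := h4 w' hw' B'
      have : (fun i => (ts i).eval w' B') = (fun i => (ts' i).eval w' B') := by
        funext i
        rcases model_una X e h v P hf w T hw _ _ (h1 i) (h2 i) (h3 i) with h6 | h6
        · rw [h6]
        · exact (mem _).1 h6 w' hw' B'
      simp only [Sat] at h5 ⊢
      rwa [← this]
    have hM := model_to_val X e h v P hn hf w T hR hw
    have hTr : Triv w := by
      intro t t' ht ht' he
      rcases model_una X e h v P hf w T hw _ _ ht ht' he with h6 | h6
      · exact h6
      · have h7 := (mem _).1 h6 (HInt (val w)) (HInt_models X e h v P hn hf hg T _ hM)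
          (fun _ => (HInt (val w)).dflt)
        exact HInt_triv _ t t' ht ht' h7
    rw [sat_hsat X w hTr T B φ ho hgr]
    exact H _ hM

theorem stable_H (X : Sem) (e h v : Bool) (P : Program S) (hn : progNormal P) (hf : fullSig P)
    (hg : goodSig P) (T : Set (Formula S)) (hT : StableExp X (tauG e h v P) T) :
    HStable e h v P (GOf T) := by
  ext a
  refine and_congr_right fun ha => ?_
  exact stable_og X e h v P hn hf hg T hT a.toFormula trivial ha

theorem HStable_model (e h v : Bool) (P : Program S) (G : Set (PAtom S))
    (hG : HStable e h v P G) : ∃ M, HModel e h v P G M := by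
  by_contra hc
  push Not at hc
  have hall : ∀ a : PAtom S, a.isGround → a ∈ G := by
    intro a ha
    rw [show G = _ from hG]
    exact ⟨ha, fun M hM => (hc M hM).elim⟩
  refine hc {a | a.isGround} ⟨fun a ha => ha, ?_, fun _ a ha => hall a ha⟩
  intro r hr σ hσ _ _ d hd
  have : (d.substA σ).isGround := substA_ground d σ (fun x hx => hσ x ⟨d, by simp [Rule.atoms, hd], hx⟩)
  exact ⟨this, fun _ => hall _ this⟩

/-! ### box-atomic formulas depend only on ground atoms -/

theorem sat_congr (X : Sem) (w : Interp S) (Γ Γ' : Set (Formula S))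
    (hΓ : ∀ φ : Formula S, φ.isAtomic → φ.isGround → (φ ∈ Γ ↔ φ ∈ Γ')) (φ : Formula S)
    (hφ : φ.boxAtomic) : ∀ B, Sat X w Γ φ B ↔ Sat X w Γ' φ B := by
  induction φ with
  | atom p ts => intro B; exact Iff.rfl
  | eq t t' => intro B; exact Iff.rfl
  | not φ ih => intro B; simp only [Sat]; rw [ih hφ]
  | and φ ψ ih1 ih2 => intro B; simp only [Sat]; rw [ih1 hφ.1, ih2 hφ.2]
  | ex x φ ih => intro B; simp only [Sat]; exact exists_congr fun u => ih hφ _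
  | box φ ih =>
    intro B
    have key : ∀ β, ((φ.subst β).closed ∧ φ.subst β ∈ Γ) ↔ ((φ.subst β).closed ∧ φ.subst β ∈ Γ') := by
      intro β
      refine and_congr_right fun hc => hΓ _ ?_ ?_
      · cases φ <;> exact hφ
      · cases φ with
        | atom p ts => exact fun i => term_ground_of_no_var _ (fun x hx => hc x ⟨i, hx⟩)
        | eq t t' => exact ⟨term_ground_of_no_var _ (fun x hx => hc x (Or.inl hx)),
            term_ground_of_no_var _ (fun x hx => hc x (Or.inr hx))⟩
        | not φ => exact hφ.elim
        | and φ ψ => exact hφ.elim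
        | ex x φ => exact hφ.elim
        | box φ => exact hφ.elim
    cases X
    · simp only [Sat]
      exact exists_congr fun β => and_congr_right fun _ => key β
    · simp only [Sat]
      exact forall_congr' fun β => imp_congr_right fun _ => key β

theorem ba_uclosure (vs : List ℕ) (φ : Formula S) (h : φ.boxAtomic) : (uclosure vs φ).boxAtomic := by
  induction vs with
  | nil => exact h
  | cons x vs ih => exact ih

theorem ba_andAll (l : List (Formula S)) (h : ∀ a ∈ l, a.boxAtomic) :
    ∀ φ : Formula S, φ.boxAtomic → (andAll φ l).boxAtomic := by
  induction l with
  | nil => intro φ hφ; exact hφ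
  | cons a l ih =>
    intro φ hφ
    exact ih (fun b hb => h b (by simp [hb])) _ ⟨hφ, h a (by simp)⟩

theorem ba_impOf (l : List (Formula S)) (c : Formula S) (h : ∀ a ∈ l, a.boxAtomic)
    (hc : c.boxAtomic) : (impOf l c).boxAtomic := by
  cases l with
  | nil => exact hc
  | cons a l => exact ⟨ba_andAll l (fun b hb => h b (by simp [hb])) a (h a (by simp)), hc⟩

theorem ba_lit (e : Bool) (a : PAtom S) : (litG e a).boxAtomic := by
  cases e
  · trivial
  · exact ⟨trivial, trivial⟩

theorem ba_tau (e h v : Bool) (P : Program S) (hn : progNormal P) :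
    ∀ φ ∈ tauG e h v P, φ.boxAtomic := by
  rintro φ ((⟨r, hr, rfl⟩ | hφ) | ⟨t, t', ht, ht', hne, rfl⟩)
  · apply ba_uclosure
    apply ba_impOf
    · intro a ha
      simp only [bodyG, List.mem_append, List.mem_map] at ha
      rcases ha with ⟨b, _, rfl⟩ | ⟨c, _, rfl⟩
      · exact ba_lit _ _
      · trivial
    · obtain ⟨d, hd⟩ := List.length_eq_one_iff.1 (hn r hr)
      rw [hd]
      exact ba_lit _ _
  · cases v
    · simp at hφ
    · simp only [if_true] at hφ
      obtain ⟨a, _, ha, rfl⟩ := hφ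
      exact ⟨trivial, trivial⟩
  · exact ⟨trivial, trivial⟩

def depth : Formula S → ℕ
  | Formula.atom _ _ => 0
  | Formula.eq _ _ => 0
  | Formula.not φ => depth φ
  | Formula.and φ ψ => max (depth φ) (depth ψ)
  | Formula.ex _ φ => depth φ
  | Formula.box φ => depth φ + 1

theorem depth_subst (φ : Formula S) : ∀ β, depth (φ.subst β) = depth φ := by
  induction φ with
  | atom p ts => intro β; rfl
  | eq t t' => intro β; rfl
  | not φ ih => intro β; exact ih β
  | and φ ψ ih1 ih2 => intro β; simp only [Formula.subst, depth, ih1, ih2]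
  | ex x φ ih => intro β; exact ih _
  | box φ ih => intro β; simp only [Formula.subst, depth, ih]

theorem sat_depth (X : Sem) (w : Interp S) (Γ Γ' : Set (Formula S)) (n : ℕ)
    (hΓ : ∀ ψ : Formula S, depth ψ < n → (ψ ∈ Γ ↔ ψ ∈ Γ')) (φ : Formula S)
    (hφ : depth φ ≤ n) : ∀ B, Sat X w Γ φ B ↔ Sat X w Γ' φ B := by
  induction φ with
  | atom p ts => intro B; exact Iff.rfl
  | eq t t' => intro B; exact Iff.rfl
  | not φ ih => intro B; simp only [Sat]; rw [ih hφ]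
  | and φ ψ ih1 ih2 =>
    intro B; simp only [Sat]
    simp only [depth, max_le_iff] at hφ
    rw [ih1 hφ.1, ih2 hφ.2]
  | ex x φ ih => intro B; simp only [Sat]; exact exists_congr fun u => ih hφ _
  | box φ ih =>
    intro B
    have key : ∀ β, ((φ.subst β).closed ∧ φ.subst β ∈ Γ) ↔
        ((φ.subst β).closed ∧ φ.subst β ∈ Γ') := by
      intro β
      refine and_congr_right fun hc => hΓ _ ?_
      rw [depth_subst]
      exact hφ
    cases X
    · simp only [Sat]
      exact exists_congr fun β => and_congr_right fun _ => key β
    · simp only [Sat]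
      exact forall_congr' fun β => imp_congr_right fun _ => key β

def chain (X : Sem) (K : Interp S → Prop) : ℕ → Set (Formula S)
  | 0 => ∅
  | n + 1 => {φ | ∀ w, K w → ModelsF X w (chain X K n) φ}

theorem chain_agree (X : Sem) (K : Interp S → Prop) (n : ℕ) : ∀ m, n ≤ m → ∀ φ : Formula S,
    depth φ < n → (φ ∈ chain X K m ↔ φ ∈ chain X K n) := by
  induction n with
  | zero => intro m _ φ h; omega
  | succ n ih =>
    intro m hm φ h
    obtain ⟨m, rfl⟩ : ∃ k, m = k + 1 := ⟨m - 1, by omega⟩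
    refine forall_congr' fun w => imp_congr_right fun _ => forall_congr' fun B => ?_
    exact sat_depth X w _ _ n (fun ψ hψ => ih m (by omega) ψ hψ) φ (by omega) B

theorem exists_belief (X : Sem) (K : Interp S → Prop) :
    ∃ T : Set (Formula S), ∀ φ, φ ∈ T ↔ ∀ w, K w → ModelsF X w T φ := by
  refine ⟨{φ | φ ∈ chain X K (depth φ + 1)}, fun φ => ?_⟩
  refine forall_congr' fun w => imp_congr_right fun _ => forall_congr' fun B => ?_
  refine sat_depth X w _ _ (depth φ) (fun ψ hψ => ?_) φ le_rfl B
  exact chain_agree X K (depth ψ + 1) (depth φ) hψ ψ (by omega)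

theorem H_stable (X : Sem) (e h v : Bool) (P : Program S) (hn : progNormal P) (hf : fullSig P)
    (hg : goodSig P) (G : Set (PAtom S)) (hG : HStable e h v P G) :
    ∃ T, StableExp X (tauG e h v P) T ∧ GOf T = G := by
  have memG : ∀ a, a ∈ G ↔ (a.isGround ∧ ∀ M, HModel e h v P G M → a ∈ M) := by
    intro a
    conv_lhs => rw [show G = _ from hG]
    rfl
  let T0 : Set (Formula S) := {φ | (∃ a ∈ G, φ = a.toFormula) ∨ ∃ t, φ = Formula.eq t t}
  have hT0 : GOf T0 = G := by
    ext a
    constructor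
    · rintro ⟨_, ⟨b, hb, hab⟩ | ⟨t, ht⟩⟩
      · rwa [atom_ext _ _ hab]
      · simp [PAtom.toFormula] at ht
    · intro ha
      exact ⟨((memG a).1 ha).1, Or.inl ⟨a, ha, rfl⟩⟩
  obtain ⟨T, hT⟩ := exists_belief X (fun w => ModelsT X w T0 (tauG e h v P))
  have hw1 : ∀ w, ModelsT X w T0 (tauG e h v P) → HModel e h v P G (val w) := by
    intro w hw
    have hTr : Triv w := by
      intro t t' ht ht' he
      rcases model_una X e h v P hf w T0 hw _ _ ht ht' he with h6 | ⟨b, _, hab⟩ | ⟨s, hs⟩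
      · exact h6
      · simp [PAtom.toFormula] at hab
      · simp only [Formula.eq.injEq] at hs
        rw [hs.1, hs.2]
    have := model_to_val X e h v P hn hf w T0 (triv_respects w hTr _) hw
    rwa [hT0] at this
  have hw2 : ∀ M, HModel e h v P G M → ModelsT X (HInt M) T0 (tauG e h v P) := by
    intro M hM
    apply HInt_models X e h v P hn hf hg
    rwa [hT0]
  have hat : ∀ a : PAtom S, a.isGround → (a.toFormula ∈ T ↔ a ∈ G) := by
    intro a ha
    constructor
    · intro h
      refine (memG a).2 ⟨ha, fun M hM => ?_⟩
      have h1 := (hT _).1 h (HInt M) (hw2 M hM) (fun _ => (HInt M).dflt)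
      rw [sat_hsat X _ (HInt_triv M) T _ a.toFormula trivial ha, HInt_val M hM.1] at h1
      exact h1
    · intro h
      refine (hT _).2 fun w hw B => ?_
      have h1 := ((memG a).1 h).2 _ (hw1 w hw)
      have e : ∀ i, (a.args i).eval w B = Term.evalG w (a.args i) :=
        fun i => term_eval_ground _ _ _ _ (ha i)
      have h2 := h1.2
      simp only [PAtom.toFormula, Sat, e]
      exact h2
  have hcongr : ∀ φ : Formula S, φ.isAtomic → φ.isGround → (φ ∈ T0 ↔ φ ∈ T) := by
    intro φ hφ hgr
    cases φ with
    | atom p ts =>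
      rw [show (Formula.atom p ts ∈ T ↔ _) from hat ⟨p, ts⟩ hgr, ← hT0]
      exact ⟨fun h => ⟨hgr, h⟩, fun h => h.2⟩
    | eq t t' =>
      constructor
      · rintro (⟨b, _, hab⟩ | ⟨s, hs⟩)
        · simp [PAtom.toFormula] at hab
        · simp only [Formula.eq.injEq] at hs
          rw [hs.1, hs.2]
          exact (hT _).2 fun w hw B => rfl
      · intro h
        right
        obtain ⟨M, hM⟩ := HStable_model e _ v P G hG
        have h1 := (hT _).1 h (HInt M) (hw2 M hM) (fun _ => (HInt M).dflt)
        refine ⟨t, ?_⟩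
        rw [HInt_triv M t t' hgr.1 hgr.2 h1]
    | not φ => exact hφ.elim
    | and φ ψ => exact hφ.elim
    | ex x φ => exact hφ.elim
    | box φ => exact hφ.elim
  refine ⟨T, ?_, ?_⟩
  · ext φ
    rw [hT]
    refine forall_congr' fun w => imp_congr_left ?_
    refine forall₂_congr fun φ hφ => forall_congr' fun B => ?_
    exact sat_congr X w T0 T hcongr φ (ba_tau e h v P hn φ hφ) B
  · ext a
    exact ⟨fun h => (hat a h.1).1 h.2, fun h => ⟨((memG a).1 h).1, (hat a ((memG a).1 h).1).2 h⟩⟩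

theorem cnog_iff (X : Sem) (e h v : Bool) (P : Program S) (hn : progNormal P) (hf : fullSig P)
    (hg : goodSig P) (φ : Formula S) :
    φ ∈ CnOg X (tauG e h v P) ↔ (φ.isObjective ∧ φ.isGround ∧
      ∀ G, HStable e h v P G → ∀ M, HModel e h v P G M → hsat M φ) := by
  constructor
  · rintro ⟨h1, h2, h3⟩
    refine ⟨h2, h3, fun G hG M hM => ?_⟩
    obtain ⟨T, hT, rfl⟩ := H_stable X e h v P hn hf hg G hG
    exact (stable_og X e h v P hn hf hg T hT φ h2 h3).1 (h1 T hT) M hM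
  · rintro ⟨h2, h3, h1⟩
    refine ⟨fun T hT => ?_, h2, h3⟩
    exact (stable_og X e h v P hn hf hg T hT φ h2 h3).2
      (h1 _ (stable_H X e h v P hn hf hg T hT))

/-! ### combinatorics -/

theorem HStable.mem {e h v : Bool} {P : Program S} {G : Set (PAtom S)} (hG : HStable e h v P G)
    (a : PAtom S) : a ∈ G ↔ (a.isGround ∧ ∀ M, HModel e h v P G M → a ∈ M) := by
  conv_lhs => rw [show G = _ from hG]
  rfl

theorem HStable_congr {e h v e' h' v' : Bool} {P : Program S} {G : Set (PAtom S)}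
    (hm : ∀ M, HModel e h v P G M ↔ HModel e' h' v' P G M) :
    HStable e h v P G ↔ HStable e' h' v' P G := by
  simp only [HStable, hm]

theorem head_ground {r : Rule S} {σ : ℕ → Term S} (hσ : ∀ x, r.hasVar x → (σ x).isGround)
    {d : PAtom S} (hd : d ∈ r.head) : (d.substA σ).isGround :=
  substA_ground d σ (fun x hx => hσ x ⟨d, by simp [Rule.atoms, hd], hx⟩)

theorem eh_to_eb {P : Program S} {G M : Set (PAtom S)} (h : HModel true true false P G M) :
    HModel true false false P G M :=
  ⟨h.1, fun r hr σ hσ hp hq d hd => ⟨(h.2.1 r hr σ hσ hp hq d hd).1, by simp⟩, by simp⟩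

theorem eb_models {P : Program S} {G : Set (PAtom S)} (hG : HStable true false false P G)
    (M : Set (PAtom S)) : HModel true false false P G M ↔ HModel true true false P G M := by
  refine ⟨fun h => ⟨h.1, fun r hr σ hσ hp hq d hd =>
    ⟨(h.2.1 r hr σ hσ hp hq d hd).1, fun _ => ?_⟩, by simp⟩, eh_to_eb⟩
  refine (hG.mem _).2 ⟨head_ground hσ hd, fun M' hM' => ?_⟩
  refine (hM'.2.1 r hr σ hσ (fun b hb => ⟨?_, (hp b hb).2⟩) hq d hd).1
  exact ((hG.mem _).1 ((hp b hb).2 rfl)).2 M' hM'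

theorem eh_models {P : Program S} {G : Set (PAtom S)} (hG : HStable true true false P G)
    (M : Set (PAtom S)) : HModel true false false P G M ↔ HModel true true false P G M := by
  refine ⟨fun h => ⟨h.1, fun r hr σ hσ hp hq d hd =>
    ⟨(h.2.1 r hr σ hσ hp hq d hd).1, fun _ => ?_⟩, by simp⟩, eh_to_eb⟩
  obtain ⟨M', hM'⟩ := HStable_model _ _ _ P G hG
  refine (hM'.2.1 r hr σ hσ (fun b hb => ⟨?_, (hp b hb).2⟩) hq d hd).2 rfl
  exact ((hG.mem _).1 ((hp b hb).2 rfl)).2 M' hM'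

theorem ebv_models {P : Program S} {G : Set (PAtom S)} (M : Set (PAtom S)) :
    HModel true false true P G M ↔ HModel false false true P G M := by
  constructor
  · intro h
    refine ⟨h.1, fun r hr σ hσ hp hq d hd => h.2.1 r hr σ hσ (fun b hb => ?_) hq d hd, h.2.2⟩
    exact ⟨(hp b hb).1, fun _ => h.2.2 rfl (hp b hb).1⟩
  · intro h
    exact ⟨h.1, fun r hr σ hσ hp hq d hd =>
      h.2.1 r hr σ hσ (fun b hb => ⟨(hp b hb).1, by simp⟩) hq d hd, h.2.2⟩

theorem hp_to_eb {P : Program S} {G M : Set (PAtom S)} (h : HModel false false false P G M) :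
    HModel true false false P G M :=
  ⟨h.1, fun r hr σ hσ hp hq d hd =>
      h.2.1 r hr σ hσ (fun b hb => ⟨(hp b hb).1, by simp⟩) hq d hd, by simp⟩

theorem hpv_to_hp {P : Program S} {G M : Set (PAtom S)} (h : HModel false false true P G M) :
    HModel false false false P G M := ⟨h.1, h.2.1, by simp⟩

theorem hp_stable_eb {P : Program S} {G : Set (PAtom S)} (hG : HStable false false false P G) :
    HStable true false false P G := by
  ext a
  constructor
  · intro ha
    refine ⟨((hG.mem a).1 ha).1, fun M hM => ?_⟩
    suffices h : HModel false false false P G (M ∩ G) from (((hG.mem a).1 ha).2 _ h).1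
    refine ⟨fun a ha => hM.1 a ha.1, fun r hr σ hσ hp hq d hd => ⟨⟨?_, ?_⟩, by simp⟩, by simp⟩
    · exact (hM.2.1 r hr σ hσ (fun b hb => ⟨(hp b hb).1.1, fun _ => (hp b hb).1.2⟩) hq d hd).1
    · refine (hG.mem _).2 ⟨head_ground hσ hd, fun M' hM' => ?_⟩
      exact (hM'.2.1 r hr σ hσ
        (fun b hb => ⟨((hG.mem _).1 (hp b hb).1.2).2 M' hM', by simp⟩) hq d hd).1
  · rintro ⟨h1, h2⟩
    exact (hG.mem a).2 ⟨h1, fun M hM => h2 M (hp_to_eb hM)⟩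

theorem hpv_stable_hp {P : Program S} {G : Set (PAtom S)} (hG : HStable false false true P G) :
    HStable false false false P G := by
  ext a
  constructor
  · intro ha
    refine ⟨((hG.mem a).1 ha).1, fun M hM => ?_⟩
    suffices h : HModel false false true P G (M ∩ G) from (((hG.mem a).1 ha).2 _ h).1
    refine ⟨fun a ha => hM.1 a ha.1, fun r hr σ hσ hp hq d hd => ⟨⟨?_, ?_⟩, by simp⟩,
      fun _ => Set.inter_subset_right⟩
    · exact (hM.2.1 r hr σ hσ (fun b hb => ⟨(hp b hb).1.1, by simp⟩) hq d hd).1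
    · refine (hG.mem _).2 ⟨head_ground hσ hd, fun M' hM' => ?_⟩
      exact (hM'.2.1 r hr σ hσ
        (fun b hb => ⟨((hG.mem _).1 (hp b hb).1.2).2 M' hM', by simp⟩) hq d hd).1
  · rintro ⟨h1, h2⟩
    exact (hG.mem a).2 ⟨h1, fun M hM => h2 M (hpv_to_hp hM)⟩

theorem part1 (X : Sem) (P : Program S) (hn : progNormal P) (hf : fullSig P) (hg : goodSig P) :
    CnOg X (tauEHv P) = CnOg X (tauEH P) ∧
    CnOg X (tauEH P) = CnOg X (tauEB P) ∧
    CnOg X (tauEBv P) = CnOg X (tauHPv P) ∧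
    CnOg X (tauEB P) ⊆ CnOg X (tauHP P) ∧
    CnOg X (tauHP P) ⊆ CnOg X (tauHPv P) := by
  rw [tauHP_eq, tauHPv_eq, tauEB_eq, tauEBv_eq]
  refine ⟨rfl, ?_, ?_, ?_, ?_⟩
  · rw [tauEH_eq]
    ext φ
    rw [cnog_iff X _ _ _ P hn hf hg, cnog_iff X _ _ _ P hn hf hg]
    refine and_congr_right fun _ => and_congr_right fun _ => ⟨fun H G hG M hM => ?_, fun H G hG M hM => ?_⟩
    · exact H G ((HStable_congr (eb_models hG)).1 hG) M ((eb_models hG M).1 hM)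
    · exact H G ((HStable_congr (eh_models hG)).2 hG) M ((eh_models hG M).2 hM)
  · ext φ
    rw [cnog_iff X _ _ _ P hn hf hg, cnog_iff X _ _ _ P hn hf hg]
    refine and_congr_right fun _ => and_congr_right fun _ => ⟨fun H G hG M hM => ?_, fun H G hG M hM => ?_⟩
    · exact H G ((HStable_congr ebv_models).2 hG) M ((ebv_models M).2 hM)
    · exact H G ((HStable_congr ebv_models).1 hG) M ((ebv_models M).1 hM)
  · intro φ
    rw [cnog_iff X _ _ _ P hn hf hg, cnog_iff X _ _ _ P hn hf hg]
    rintro ⟨h1, h2, h3⟩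
    exact ⟨h1, h2, fun G hG M hM => h3 G (hp_stable_eb hG) M (hp_to_eb hM)⟩
  · intro φ
    rw [cnog_iff X _ _ _ P hn hf hg, cnog_iff X _ _ _ P hn hf hg]
    rintro ⟨h1, h2, h3⟩
    exact ⟨h1, h2, fun G hG M hM => h3 G (hpv_stable_hp hG) M (hpv_to_hp hM)⟩

/-! ### counterexample: `p ← q` -/

def S0 : Sig := ⟨Empty, Bool, fun _ => 0, fun _ => 0⟩

def at0 (b : Bool) : PAtom S0 := ⟨b, fun i => i.elim0⟩

theorem at0_eq (a : PAtom S0) : a = at0 a.p := by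
  cases a with
  | mk p args =>
    simp only [at0]
    congr 1
    funext i
    exact i.elim0

theorem at0_ground (a : PAtom S0) : a.isGround := fun i => i.elim0

def r0 : Rule S0 := ⟨[at0 true], [at0 false], [], []⟩

def P0 : Program S0 := {r0}

theorem P0_wf : progWf P0 := by
  rintro r rfl
  refine ⟨by simp [r0], ?_⟩
  rintro x ⟨a, _, i, _⟩
  exact i.elim0

theorem P0_normal : progNormal P0 := by
  rintro r rfl
  rfl

theorem P0_full : fullSig P0 := by
  refine ⟨fun f => f.elim, fun q => ⟨r0, rfl, at0 q, ?_, rfl⟩⟩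
  cases q <;> simp [Rule.atoms, r0]

theorem P0_good : goodSig P0 := by
  rintro ⟨q, _, hq⟩
  exact absurd hq (lt_irrefl 0)

theorem P0_model (e h v : Bool) (G M : Set (PAtom S0)) : HModel e h v P0 G M ↔
    ((at0 false ∈ M ∧ (e = true → at0 false ∈ G) → at0 true ∈ M ∧ (h = true → at0 true ∈ G)) ∧
      (v = true → M ⊆ G)) := by
  have hs : ∀ b σ, (at0 b).substA σ = at0 b := fun b σ => substA_of_ground _ _ (at0_ground _)
  constructor
  · rintro ⟨_, h2, h3⟩
    refine ⟨fun hb => ?_, h3⟩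
    have := h2 r0 rfl Term.var (by rintro x ⟨a, _, i, _⟩; exact i.elim0)
      (by simpa [r0, hs] using hb) (by simp [r0]) (at0 true) (by simp [r0])
    rwa [hs] at this
  · rintro ⟨h2, h3⟩
    refine ⟨fun a _ => at0_ground a, ?_, h3⟩
    rintro r rfl σ _ hp _ d hd
    simp only [r0, List.mem_singleton] at hd
    subst hd
    rw [hs]
    apply h2
    have := hp (at0 false) (by simp [r0])
    rwa [hs] at this

theorem P0_stable (e h v : Bool) (G : Set (PAtom S0)) (hG : HStable e h v P0 G)
    : G = ∅ := by
  ext a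
  simp only [Set.mem_empty_iff_false, iff_false]
  intro ha
  exact ((hG.mem a).1 ha).2 ∅ ((P0_model e h v G ∅).2 (by simp))

theorem P0_stable' (e h v : Bool) : HStable e h v P0 ∅ := by
  ext a
  simp only [Set.mem_empty_iff_false, false_iff]
  rintro ⟨_, h2⟩
  exact h2 ∅ ((P0_model e h v ∅ ∅).2 (by simp))

theorem P0_cn (X : Sem) (e h v : Bool) (φ : Formula S0) : φ ∈ CnOg X (tauG e h v P0) ↔
    (φ.isObjective ∧ φ.isGround ∧ ∀ M, HModel e h v P0 ∅ M → hsat M φ) := by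
  rw [cnog_iff X e h v P0 P0_normal P0_full P0_good]
  refine and_congr_right fun _ => and_congr_right fun _ => ⟨fun H => H ∅ (P0_stable' e h v), ?_⟩
  intro H G hG
  rw [P0_stable e h v G hG]
  exact H

def f1 : Formula S0 := Formula.imp (at0 false).toFormula (at0 true).toFormula
def f2 : Formula S0 := Formula.not (at0 false).toFormula

theorem f1_og : f1.isObjective ∧ f1.isGround :=
  ⟨⟨trivial, trivial⟩, fun i => i.elim0, fun i => i.elim0⟩
theorem f2_og : f2.isObjective ∧ f2.isGround :=
  ⟨trivial, fun i => i.elim0⟩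

theorem hsat_f1 (M : Set (PAtom S0)) : hsat M f1 ↔ (at0 false ∈ M → at0 true ∈ M) := by
  show ¬ (at0 false ∈ M ∧ ¬ at0 true ∈ M) ↔ _
  tauto
theorem hsat_f2 (M : Set (PAtom S0)) : hsat M f2 ↔ at0 false ∉ M := Iff.rfl

theorem f1_hp (X : Sem) : f1 ∈ CnOg X (tauHP P0) := by
  rw [tauHP_eq, P0_cn]
  refine ⟨f1_og.1, f1_og.2, fun M hM => ?_⟩
  rw [P0_model] at hM
  rw [hsat_f1]
  exact fun h => (hM.1 ⟨h, by simp⟩).1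

theorem at0_ne : at0 true ≠ at0 false := by
  intro h
  have := congrArg PAtom.p h
  exact absurd this (show ¬ (true = false) by simp)

theorem f1_eb (X : Sem) : f1 ∉ CnOg X (tauEB P0) := by
  rw [tauEB_eq, P0_cn]
  rintro ⟨_, _, H⟩
  have := H {at0 false} (by rw [P0_model]; simp)
  rw [hsat_f1] at this
  exact at0_ne (this rfl)

theorem f2_hpv (X : Sem) : f2 ∈ CnOg X (tauHPv P0) := by
  rw [tauHPv_eq, P0_cn]
  refine ⟨f2_og.1, f2_og.2, fun M hM => ?_⟩
  rw [P0_model] at hM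
  exact fun h => hM.2 rfl h

theorem f2_hp (X : Sem) : f2 ∉ CnOg X (tauHP P0) := by
  rw [tauHP_eq, P0_cn]
  rintro ⟨_, _, H⟩
  exact H Set.univ (by rw [P0_model]; simp) trivial

theorem er {i j : EmbKind} (h : EmbRel i j) : Relation.ReflTransGen EmbRel i j :=
  Relation.ReflTransGen.single h

theorem part2 (X : Sem) (i j : EmbKind) (hij : ¬ Relation.ReflTransGen EmbRel i j) :
    ¬ CnOg X (EmbKind.toTau i P0) ⊆ CnOg X (EmbKind.toTau j P0) := by
  obtain ⟨h1, h2, h3, h4, h5⟩ := part1 X P0 P0_normal P0_full P0_good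
  have a1 := f1_hp X
  have a2 := f1_eb X
  have a3 := f2_hpv X
  have a4 := f2_hp X
  have a5 := h5 a1
  have e1 : EmbRel .ehv .eh := by simp [EmbRel]
  have e2 : EmbRel .eh .ehv := by simp [EmbRel]
  have e3 : EmbRel .eh .eb := by simp [EmbRel]
  have e4 : EmbRel .eb .eh := by simp [EmbRel]
  have e5 : EmbRel .ebv .hpv := by simp [EmbRel]
  have e6 : EmbRel .hpv .ebv := by simp [EmbRel]
  have e7 : EmbRel .eb .hp := by simp [EmbRel]
  have e8 : EmbRel .hp .hpv := by simp [EmbRel]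
  cases i <;> cases j <;> simp only [EmbKind.toTau, h1, h2, h3] <;>
  first
  | exact fun H => a2 (H a1)
  | exact fun H => a2 (H a5)
  | exact fun H => a4 (H a3)
  | exact (hij .refl).elim
  | exact (hij (er ‹_›)).elim
  | exact (hij ((er e1).trans (er e3))).elim
  | exact (hij ((er e4).trans (er e2))).elim
  | exact (hij ((er e3).trans (er e7))).elim
  | exact (hij (((er e1).trans (er e3)).trans (er e7))).elim
  | exact (hij ((er e8).trans (er e6))).elim
  | exact (hij ((er e7).trans (er e8))).elim
  | exact (hij (((er e7).trans (er e8)).trans (er e6))).elim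
  | exact (hij (((er e3).trans (er e7)).trans (er e8))).elim
  | exact (hij ((((er e3).trans (er e7)).trans (er e8)).trans (er e6))).elim
  | exact (hij ((((er e1).trans (er e3)).trans (er e7)).trans (er e8))).elim
  | exact (hij (((((er e1).trans (er e3)).trans (er e7)).trans (er e8)).trans (er e6))).elim

end AEL

/-- Inclusions between objective ground consequence sets,
with completeness: the stated relations hold for every normal program, and for
every pair of embeddings for which no inclusion follows from them by reflexivity
and transitivity, there is a normal program for which the inclusion fails. -/
theorem stmt13 (X : Sem) :
    (∀ (S : Sig) (P : Program S), progWf P → progNormal P → fullSig P → goodSig P →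
        CnOg X (tauEHv P) = CnOg X (tauEH P) ∧
        CnOg X (tauEH P) = CnOg X (tauEB P) ∧
        CnOg X (tauEBv P) = CnOg X (tauHPv P) ∧
        CnOg X (tauEB P) ⊆ CnOg X (tauHP P) ∧
        CnOg X (tauHP P) ⊆ CnOg X (tauHPv P)) ∧
    (∀ i j : EmbKind, ¬ Relation.ReflTransGen EmbRel i j →
      ∃ (S : Sig) (P : Program S), progWf P ∧ progNormal P ∧ fullSig P ∧ goodSig P ∧
        ¬ CnOg X (EmbKind.toTau i P) ⊆ CnOg X (EmbKind.toTau j P)) := by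
  exact ⟨fun S P _ hn hf hg => AEL.part1 X P hn hf hg, fun i j hij =>
    ⟨AEL.S0, AEL.P0, AEL.P0_wf, AEL.P0_normal, AEL.P0_full, AEL.P0_good, AEL.part2 X i j hij⟩⟩
end

section
/- Let Φ be a generalized Horn first-order theory and P a safe normal positive logic program; then ι_EB(Φ,P) ≡ᴱ_oga ι_EH(Φ,P). Let Φ be a Horn first-order theory and P a normal positive logic program; then ι_HP(Φ,P) ≡ᴱ_oga ι_EB(Φ,P) ≡ᴱ_oga ι_EH(Φ,P). -/
set_option autoImplicit false

section Helpers

variable {S : Sig}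

theorem Term.ground_iff (t : Term S) : t.isGround ↔ ∀ x, ¬ t.hasVar x := by
  induction t with
  | var y => simp [Term.isGround, Term.hasVar]
  | func f ts ih =>
    simp only [Term.isGround, Term.hasVar, ih, not_exists]
    exact ⟨fun h x i => h i x, fun h i x => h x i⟩

theorem Term.isNameOf_ground (F : Set S.Func) (t : Term S) : t.isNameOf F → t.isGround := by
  induction t with
  | var y => simp [Term.isNameOf]
  | func f ts ih =>
    simp only [Term.isGround, Term.isNameOf]
    exact fun h i => ih i (h.2 i)

theorem Term.subst_congr (β β' : ℕ → Option (Term S)) (t : Term S)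
    (h : ∀ x, t.hasVar x → β x = β' x) : t.subst β = t.subst β' := by
  induction t with
  | var y => simp [Term.subst, h y rfl]
  | func f ts ih =>
    simp only [Term.subst]
    congr 1
    funext i
    exact ih i (fun x hx => h x ⟨i, hx⟩)

theorem Term.subst_none (t : Term S) : t.subst (fun _ => none) = t := by
  induction t with
  | var y => simp [Term.subst]
  | func f ts ih => simp [Term.subst, ih]

theorem Term.subst_ground (β : ℕ → Option (Term S)) (t : Term S) (h : t.isGround) :
    t.subst β = t := by
  rw [Term.subst_congr β (fun _ => none) t, Term.subst_none]
  intro x hx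
  exact absurd hx ((Term.ground_iff t).1 h x)

theorem Term.eval_congr (w : Interp S) (B B' : ℕ → w.U) (t : Term S)
    (h : ∀ x, t.hasVar x → B x = B' x) : t.eval w B = t.eval w B' := by
  induction t with
  | var y => exact h y rfl
  | func f ts ih =>
    simp only [Term.eval]
    congr 1
    funext i
    exact ih i (fun x hx => h x ⟨i, hx⟩)

theorem Term.eval_ground (w : Interp S) (B : ℕ → w.U) (t : Term S) (h : t.isGround) :
    t.eval w B = t.evalG w :=
  Term.eval_congr w _ _ t (fun x hx => absurd hx ((Term.ground_iff t).1 h x))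

theorem Term.eval_subst (w : Interp S) (B : ℕ → w.U) (β : ℕ → Option (Term S))
    (hβ : Assoc w B β) (t : Term S) : (t.subst β).eval w B = t.eval w B := by
  induction t with
  | var y =>
    simp only [Term.subst]
    cases hy : β y with
    | none => rfl
    | some t =>
      have := (hβ y).2 t hy
      simp only [Option.getD_some, Term.eval]
      rw [Term.eval_ground w B t this.1, this.2]
  | func f ts ih => simp [Term.subst, Term.eval, ih]

theorem Term.isGround_subst (β : ℕ → Option (Term S)) (t : Term S)
    (hβ : ∀ x t', β x = some t' → t'.isGround) :
    (t.subst β).isGround ↔ ∀ x, t.hasVar x → (β x).isSome := by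
  induction t with
  | var y =>
    simp only [Term.subst, Term.hasVar]
    cases hy : β y with
    | none =>
      constructor
      · intro h; exact absurd h (by simp [Term.isGround])
      · intro h; have := h y rfl; simp [hy] at this
    | some t =>
      constructor
      · rintro - x rfl; simp [hy]
      · intro _; exact hβ y t hy
  | func f ts ih =>
    simp only [Term.subst, Term.isGround, Term.hasVar, ih]
    exact ⟨fun h x ⟨i, hi⟩ => h i x hi, fun h i x hi => h x ⟨i, hi⟩⟩

theorem closed_atom_iff (p : S.Pred) (ts : Fin (S.arP p) → Term S) :
    (Formula.atom p ts).closed ↔ ∀ i, (ts i).isGround := by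
  simp only [Formula.closed, Formula.freeIn, Term.ground_iff, not_exists]
  exact ⟨fun h i x => h x i, fun h x i => h i x⟩

theorem closed_eq_iff (t₁ t₂ : Term S) :
    (Formula.eq t₁ t₂).closed ↔ t₁.isGround ∧ t₂.isGround := by
  simp only [Formula.closed, Formula.freeIn, Term.ground_iff, not_or, forall_and]

theorem exists_assoc (w : Interp S) (B : ℕ → w.U) : ∃ β, Assoc w B β := by
  classical
  refine ⟨fun x => if h : IsNamed w (B x) then some h.choose else none, fun x => ⟨?_, ?_⟩⟩
  · intro h; simp [h]
  · intro t ht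
    by_cases h : IsNamed w (B x)
    · simp only [h, dite_true, Option.some.injEq] at ht
      subst ht
      exact h.choose_spec
    · simp [h] at ht

def IsOga (φ : Formula S) : Prop := φ.isObjective ∧ φ.isGround ∧ φ.isAtomic

theorem isAtomic_subst (β : ℕ → Option (Term S)) (φ : Formula S) (h : φ.isAtomic) :
    (φ.subst β).isAtomic := by
  cases φ <;> simp_all [Formula.isAtomic, Formula.subst]

theorem oga_of_closed (φ : Formula S) (h : φ.isAtomic) (hc : φ.closed) : IsOga φ := by
  cases φ with
  | atom p ts => exact ⟨trivial, (closed_atom_iff p ts).1 hc, trivial⟩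
  | eq a b => exact ⟨trivial, (closed_eq_iff a b).1 hc, trivial⟩
  | _ => simp [Formula.isAtomic] at h

theorem closed_of_oga (φ : Formula S) (h : IsOga φ) : φ.closed := by
  obtain ⟨_, h2, h3⟩ := h
  cases φ with
  | atom p ts => exact (closed_atom_iff p ts).2 h2
  | eq a b => exact (closed_eq_iff a b).2 h2
  | _ => simp [Formula.isAtomic] at h3

theorem mem_ogaOf (Γ : Set (Formula S)) (φ : Formula S) : φ ∈ ogaOf Γ ↔ φ ∈ Γ ∧ IsOga φ := Iff.rfl

theorem sat_boxAtomic (w : Interp S) (Γ : Set (Formula S)) (φ : Formula S)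
    (h : φ.boxAtomic) : ∀ B, Sat Sem.any w Γ φ B ↔ Sat Sem.any w (ogaOf Γ) φ B := by
  induction φ with
  | atom p ts => intro B; simp [Sat]
  | eq a b => intro B; simp [Sat]
  | not φ ih => intro B; simp only [Sat]; rw [ih h]
  | and φ ψ ih1 ih2 => intro B; simp only [Sat]; rw [ih1 h.1, ih2 h.2]
  | ex x φ ih => intro B; simp only [Sat, ih h]
  | box φ ih =>
    intro B
    simp only [Sat, mem_ogaOf]
    refine exists_congr fun β => ?_
    constructor
    · rintro ⟨h1, h2, h3⟩
      exact ⟨h1, h2, h3, oga_of_closed _ (isAtomic_subst β φ h) h2⟩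
    · rintro ⟨h1, h2, h3, _⟩
      exact ⟨h1, h2, h3⟩

theorem sat_objective (w : Interp S) (Γ Γ' : Set (Formula S)) (φ : Formula S)
    (h : φ.isObjective) : ∀ B, Sat Sem.any w Γ φ B ↔ Sat Sem.any w Γ' φ B := by
  induction φ with
  | atom p ts => intro B; simp [Sat]
  | eq a b => intro B; simp [Sat]
  | not φ ih => intro B; simp only [Sat]; rw [ih h]
  | and φ ψ ih1 ih2 => intro B; simp only [Sat]; rw [ih1 h.1, ih2 h.2]
  | ex x φ ih => intro B; simp only [Sat, ih h]
  | box φ ih => exact absurd h (by simp [Formula.isObjective])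

theorem boxAtomic_of_objective (φ : Formula S) (h : φ.isObjective) : φ.boxAtomic := by
  induction φ with
  | atom p ts => trivial
  | eq a b => trivial
  | not φ ih => exact ih h
  | and φ ψ ih1 ih2 => exact ⟨ih1 h.1, ih2 h.2⟩
  | ex x φ ih => exact ih h
  | box φ ih => exact absurd h (by simp [Formula.isObjective])

/-! ### Stable expansions from fixpoints -/

def bdepth : Formula S → ℕ
  | Formula.atom _ _ => 0
  | Formula.eq _ _ => 0
  | Formula.not φ => bdepth φ
  | Formula.and φ ψ => max (bdepth φ) (bdepth ψ)
  | Formula.ex _ φ => bdepth φ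
  | Formula.box φ => bdepth φ + 1

theorem bdepth_subst (φ : Formula S) : ∀ β, bdepth (φ.subst β) = bdepth φ := by
  induction φ with
  | atom p ts => intro β; rfl
  | eq a b => intro β; rfl
  | not φ ih => intro β; simp [Formula.subst, bdepth, ih]
  | and φ ψ ih1 ih2 => intro β; simp [Formula.subst, bdepth, ih1, ih2]
  | ex x φ ih => intro β; simp [Formula.subst, bdepth, ih]
  | box φ ih => intro β; simp [Formula.subst, bdepth, ih]

theorem sat_depth (w : Interp S) (Γ Γ' : Set (Formula S)) (n : ℕ)
    (hΓ : ∀ ψ, bdepth ψ < n → (ψ ∈ Γ ↔ ψ ∈ Γ')) (φ : Formula S) (h : bdepth φ ≤ n) :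
    ∀ B, Sat Sem.any w Γ φ B ↔ Sat Sem.any w Γ' φ B := by
  induction φ with
  | atom p ts => intro B; simp [Sat]
  | eq a b => intro B; simp [Sat]
  | not φ ih => intro B; simp only [Sat]; rw [ih h]
  | and φ ψ ih1 ih2 =>
    intro B
    simp only [bdepth] at h
    simp only [Sat]; rw [ih1 (by omega), ih2 (by omega)]
  | ex x φ ih => intro B; simp only [Sat, ih h]
  | box φ ih =>
    intro B
    simp only [bdepth] at h
    simp only [Sat]
    refine exists_congr fun β => ?_
    rw [hΓ (φ.subst β) (by rw [bdepth_subst]; omega)]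

def TLev (C : Interp S → Prop) : ℕ → Set (Formula S)
  | 0 => ∅
  | n + 1 => {φ | ∀ w, C w → ModelsF Sem.any w (TLev C n) φ}

theorem TLev_stab (C : Interp S → Prop) : ∀ n m (φ : Formula S), bdepth φ < n → bdepth φ < m →
    (φ ∈ TLev C n ↔ φ ∈ TLev C m) := by
  intro n
  induction n with
  | zero => intro m φ h; omega
  | succ n ih =>
    intro m φ h1 h2
    cases m with
    | zero => omega
    | succ m =>
      simp only [TLev, Set.mem_ofPred_eq, ModelsF]
      refine forall_congr' fun w => imp_congr_right fun _ => forall_congr' fun B => ?_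
      exact sat_depth w _ _ (bdepth φ) (fun ψ hψ => ih m ψ (by omega) (by omega)) φ le_rfl B

def TAll (C : Interp S → Prop) : Set (Formula S) := {φ | φ ∈ TLev C (bdepth φ + 1)}

theorem mem_TAll (C : Interp S → Prop) (φ : Formula S) :
    φ ∈ TAll C ↔ ∀ w, C w → ModelsF Sem.any w (TAll C) φ := by
  show (∀ w, C w → ModelsF Sem.any w (TLev C (bdepth φ)) φ) ↔ _
  refine forall_congr' fun w => imp_congr_right fun _ => forall_congr' fun B => ?_
  exact sat_depth w _ _ (bdepth φ)
    (fun ψ hψ => TLev_stab C (bdepth φ) (bdepth ψ + 1) ψ hψ (by omega)) φ le_rfl B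

def IsFix (Ψ Γ : Set (Formula S)) : Prop := ∀ φ, φ ∈ Γ ↔ IsOga φ ∧ Entails Sem.any Ψ Γ φ

theorem modelsT_oga (w : Interp S) (Ψ Γ : Set (Formula S)) (hΨ : ∀ φ ∈ Ψ, φ.boxAtomic) :
    ModelsT Sem.any w Γ Ψ ↔ ModelsT Sem.any w (ogaOf Γ) Ψ := by
  unfold ModelsT ModelsF
  exact forall₂_congr fun φ h => forall_congr' fun B => sat_boxAtomic w Γ φ (hΨ φ h) B

theorem fix_of_stable (Ψ T : Set (Formula S)) (hΨ : ∀ φ ∈ Ψ, φ.boxAtomic)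
    (h : StableExp Sem.any Ψ T) : IsFix Ψ (ogaOf T) := by
  intro φ
  rw [mem_ogaOf, and_comm]
  refine and_congr_right fun ho => ?_
  have : φ ∈ T ↔ Entails Sem.any Ψ T φ := by
    conv_lhs => rw [h]
    rfl
  rw [this]
  unfold Entails
  refine forall_congr' fun w => ?_
  rw [modelsT_oga w Ψ T hΨ]
  refine imp_congr_right fun _ => forall_congr' fun B => ?_
  exact sat_objective w _ _ φ ho.1 B

theorem stable_of_fix (Ψ Γ : Set (Formula S)) (hΨ : ∀ φ ∈ Ψ, φ.boxAtomic)
    (h : IsFix Ψ Γ) : ∃ T, StableExp Sem.any Ψ T ∧ Γ = ogaOf T := by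
  let C : Interp S → Prop := fun w => ModelsT Sem.any w Γ Ψ
  have hoga : Γ = ogaOf (TAll C) := by
    ext φ
    rw [mem_ogaOf, h φ, and_comm]
    refine and_congr_left fun ho => ?_
    rw [mem_TAll]
    refine forall_congr' fun w => imp_congr_right fun _ => forall_congr' fun B => ?_
    exact sat_objective w _ _ φ ho.1 B
  refine ⟨TAll C, ?_, hoga⟩
  ext φ
  rw [mem_TAll]
  refine forall_congr' fun w => ?_
  rw [modelsT_oga w Ψ (TAll C) hΨ, ← hoga]

theorem equiv_of_fix (Ψ₁ Ψ₂ : Set (Formula S)) (h1 : ∀ φ ∈ Ψ₁, φ.boxAtomic)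
    (h2 : ∀ φ ∈ Ψ₂, φ.boxAtomic) (h : ∀ Γ, IsFix Ψ₁ Γ ↔ IsFix Ψ₂ Γ) :
    ExpEquivSel Sem.any ogaOf Ψ₁ Ψ₂ := by
  constructor
  · intro T hT
    exact stable_of_fix Ψ₂ _ h2 ((h _).1 (fix_of_stable Ψ₁ T h1 hT))
  · intro T hT
    obtain ⟨T', h3, h4⟩ := stable_of_fix Ψ₁ _ h1 ((h _).2 (fix_of_stable Ψ₂ T h2 hT))
    exact ⟨T', h3, h4.symm⟩

/-! ### Satisfaction of compound formulas -/

theorem modelsF_uclosure (w : Interp S) (Γ : Set (Formula S)) (vs : List ℕ) (φ : Formula S) :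
    ModelsF Sem.any w Γ (uclosure vs φ) ↔ ModelsF Sem.any w Γ φ := by
  induction vs with
  | nil => rfl
  | cons x vs ih =>
    rw [← ih]
    show (∀ B, ¬ ∃ u, ¬ Sat Sem.any w Γ (uclosure vs φ) (Function.update B x u)) ↔ _
    constructor
    · intro h B
      have := h B
      push Not at this
      simpa using this (B x)
    · rintro h B ⟨u, hu⟩
      exact hu (h _)

theorem sat_andAll (w : Interp S) (Γ : Set (Formula S)) (B : ℕ → w.U) (bs : List (Formula S)) :
    ∀ b, Sat Sem.any w Γ (andAll b bs) B ↔ ∀ c ∈ b :: bs, Sat Sem.any w Γ c B := by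
  induction bs with
  | nil => intro b; simp [andAll]
  | cons c bs ih => intro b; simp [andAll, ih, Sat, and_assoc]

theorem sat_impOf (w : Interp S) (Γ : Set (Formula S)) (B : ℕ → w.U) (bs : List (Formula S))
    (c : Formula S) : Sat Sem.any w Γ (impOf bs c) B ↔
      ((∀ b ∈ bs, Sat Sem.any w Γ b B) → Sat Sem.any w Γ c B) := by
  cases bs with
  | nil => simp [impOf]
  | cons b bs =>
    show ¬ (Sat Sem.any w Γ (andAll b bs) B ∧ ¬ Sat Sem.any w Γ c B) ↔ _
    rw [sat_andAll]
    tauto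

theorem boxAtomic_uclosure (vs : List ℕ) (φ : Formula S) (h : φ.boxAtomic) :
    (uclosure vs φ).boxAtomic := by
  induction vs with
  | nil => exact h
  | cons x vs ih => exact ih

theorem boxAtomic_andAll (bs : List (Formula S)) : ∀ b, (∀ c ∈ b :: bs, c.boxAtomic) →
    (andAll b bs).boxAtomic := by
  induction bs with
  | nil => intro b h; exact h b (by simp)
  | cons c bs ih =>
    intro b h
    refine ih _ ?_
    intro d hd
    rcases List.mem_cons.1 hd with rfl | hd
    · exact ⟨h b (by simp), h c (by simp)⟩
    · exact h d (by simp [hd])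

theorem boxAtomic_impOf (bs : List (Formula S)) (c : Formula S) (h : ∀ b ∈ bs, b.boxAtomic)
    (hc : c.boxAtomic) : (impOf bs c).boxAtomic := by
  cases bs with
  | nil => exact hc
  | cons b bs => exact ⟨boxAtomic_andAll bs b h, hc⟩


/-! ### Rules -/

theorem models_HP (w : Interp S) (Γ : Set (Formula S)) (r : Rule S) (h : PAtom S)
    (hh : r.head = [h]) (hn : r.neg = []) :
    ModelsF Sem.any w Γ (embHP r) ↔
      ∀ B, (∀ b ∈ r.pos, Sat Sem.any w Γ b.toFormula B) → Sat Sem.any w Γ h.toFormula B := by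
  rw [embHP, modelsF_uclosure]
  refine forall_congr' fun B => ?_
  rw [sat_impOf]
  simp [bodyHP, hh, hn, disjOf, orAll]

theorem models_EB (w : Interp S) (Γ : Set (Formula S)) (r : Rule S) (h : PAtom S)
    (hh : r.head = [h]) (hn : r.neg = []) :
    ModelsF Sem.any w Γ (embEB r) ↔
      ∀ B, (∀ b ∈ r.pos, Sat Sem.any w Γ b.toFormula B ∧ Sat Sem.any w Γ b.toFormula.box B) →
        Sat Sem.any w Γ h.toFormula B := by
  rw [embEB, modelsF_uclosure]
  refine forall_congr' fun B => ?_
  rw [sat_impOf]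
  simp only [bodyE, hh, hn, disjOf, orAll, List.map_nil, List.append_nil, List.mem_map,
    forall_exists_index, and_imp, forall_apply_eq_imp_iff₂, List.map_cons, Sat]

theorem models_EH (w : Interp S) (Γ : Set (Formula S)) (r : Rule S) (h : PAtom S)
    (hh : r.head = [h]) (hn : r.neg = []) :
    ModelsF Sem.any w Γ (embEH r) ↔
      ∀ B, (∀ b ∈ r.pos, Sat Sem.any w Γ b.toFormula B ∧ Sat Sem.any w Γ b.toFormula.box B) →
        (Sat Sem.any w Γ h.toFormula B ∧ Sat Sem.any w Γ h.toFormula.box B) := by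
  rw [embEH, modelsF_uclosure]
  refine forall_congr' fun B => ?_
  rw [sat_impOf]
  simp only [bodyE, hh, hn, disjOf, orAll, List.map_nil, List.append_nil, List.mem_map,
    forall_exists_index, and_imp, forall_apply_eq_imp_iff₂, List.map_cons, Sat]

theorem head_of_normal (r : Rule S) (h : r.isNormal) : ∃ a, r.head = [a] :=
  List.length_eq_one_iff.1 h

theorem boxAtomic_UNA (P : Program S) : ∀ φ ∈ UNAax P, φ.boxAtomic := by
  rintro φ ⟨t₁, t₂, -, -, -, rfl⟩
  exact ⟨trivial, trivial⟩

theorem boxAtomic_bodyHP (r : Rule S) : ∀ b ∈ bodyHP r, b.boxAtomic := by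
  intro b hb
  simp only [bodyHP, List.mem_append, List.mem_map] at hb
  rcases hb with ⟨a, _, rfl⟩ | ⟨a, _, rfl⟩ <;> trivial

theorem boxAtomic_bodyE (r : Rule S) : ∀ b ∈ bodyE r, b.boxAtomic := by
  intro b hb
  simp only [bodyE, List.mem_append, List.mem_map] at hb
  rcases hb with ⟨a, _, rfl⟩ | ⟨a, _, rfl⟩
  · exact ⟨trivial, trivial⟩
  · trivial

theorem boxAtomic_all (Φ : Set (Formula S)) (P : Program S) (hΦ : FOTheory Φ)
    (hP : progNormal P) (emb : Rule S → Formula S) (hemb : emb = embHP ∨ emb = embEB ∨ emb = embEH) :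
    ∀ φ ∈ Φ ∪ (ruleEmb emb P ∪ UNAax P), φ.boxAtomic := by
  rintro φ (h | ⟨r, hr, rfl⟩ | h)
  · exact boxAtomic_of_objective _ (hΦ φ h).1
  · obtain ⟨a, ha⟩ := head_of_normal r (hP r hr)
    rcases hemb with rfl | rfl | rfl
    · refine boxAtomic_uclosure _ _ (boxAtomic_impOf _ _ (boxAtomic_bodyHP r) ?_)
      rw [ha]; trivial
    · refine boxAtomic_uclosure _ _ (boxAtomic_impOf _ _ (boxAtomic_bodyE r) ?_)
      rw [ha]; trivial
    · refine boxAtomic_uclosure _ _ (boxAtomic_impOf _ _ (boxAtomic_bodyE r) ?_)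
      rw [ha]; exact ⟨trivial, trivial⟩
  · exact boxAtomic_UNA P φ h

/-! ### Substructures of products -/

structure SubProd (W : Interp S) {I : Type} (w : I → Interp S) (π : ∀ i, W.U → (w i).U) :
    Prop where
  func : ∀ i f us, π i (W.interpF f us) = (w i).interpF f (fun j => π i (us j))
  pred : ∀ p us, W.interpP p us ↔ ∀ i, (w i).interpP p (fun j => π i (us j))
  inj : ∀ u v, (∀ i, π i u = π i v) → u = v

section SP

variable {W : Interp S} {I : Type} {w : I → Interp S} {π : ∀ i, W.U → (w i).U}

theorem SubProd.eval (H : SubProd W w π) (i : I) (B : ℕ → W.U) (t : Term S) :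
    π i (t.eval W B) = t.eval (w i) (fun x => π i (B x)) := by
  induction t with
  | var y => rfl
  | func f ts ih => simp only [Term.eval, H.func, ih]

theorem SubProd.evalG (H : SubProd W w π) (i : I) (t : Term S) (ht : t.isGround) :
    π i (t.evalG W) = t.evalG (w i) := by
  rw [Term.evalG, H.eval, Term.eval_ground _ _ _ ht]

theorem SubProd.sat_atomic (H : SubProd W w π) (Γ : Set (Formula S)) (φ : Formula S)
    (hφ : φ.isAtomic) (B : ℕ → W.U) :
    Sat Sem.any W Γ φ B ↔ ∀ i, Sat Sem.any (w i) Γ φ (fun x => π i (B x)) := by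
  cases φ with
  | atom p ts => simp only [Sat, H.pred, H.eval]
  | eq a b =>
    simp only [Sat, ← H.eval]
    exact ⟨fun h i => by rw [h], fun h => H.inj _ _ h⟩
  | _ => simp [Formula.isAtomic] at hφ

theorem SubProd.sat_ex (H : SubProd W w π) (Γ : Set (Formula S)) (φ : Formula S)
    (hφ : φ.isAtomic) (hs : ∀ u : ∀ i, (w i).U, ∃ v, ∀ i, π i v = u i) (ys : List ℕ) :
    ∀ B : ℕ → W.U, (∀ i, Sat Sem.any (w i) Γ (exClosure ys φ) (fun x => π i (B x))) →
      Sat Sem.any W Γ (exClosure ys φ) B := by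
  induction ys with
  | nil => intro B h; exact (H.sat_atomic Γ φ hφ B).2 h
  | cons y ys ih =>
    intro B h
    have h' : ∀ i, ∃ u, Sat Sem.any (w i) Γ (exClosure ys φ)
      (Function.update (fun x => π i (B x)) y u) := h
    choose u hu using h'
    obtain ⟨v, hv⟩ := hs u
    refine ⟨v, ih _ fun i => ?_⟩
    convert hu i using 1
    funext x
    by_cases hx : x = y
    · subst hx; simp [hv]
    · simp [hx]

theorem SubProd.pres_imp (H : SubProd W w π) (Γ : Set (Formula S)) (vs : List ℕ)
    (bs : List (Formula S)) (ys : List ℕ) (h : Formula S)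
    (hbs : ∀ b ∈ bs, b.isAtomic) (hh : h.isAtomic)
    (hs : ys = [] ∨ ∀ u : ∀ i, (w i).U, ∃ v, ∀ i, π i v = u i)
    (hw : ∀ i, ModelsF Sem.any (w i) Γ (uclosure vs (impOf bs (exClosure ys h)))) :
    ModelsF Sem.any W Γ (uclosure vs (impOf bs (exClosure ys h))) := by
  simp only [modelsF_uclosure] at hw ⊢
  intro B
  rw [sat_impOf]
  intro hb
  have : ∀ i, Sat Sem.any (w i) Γ (exClosure ys h) (fun x => π i (B x)) := by
    intro i
    refine (sat_impOf _ _ _ _ _).1 (hw i _) fun b hb' => ?_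
    exact (H.sat_atomic Γ b (hbs b hb') B).1 (hb b hb') i
  rcases hs with rfl | hs
  · exact (H.sat_atomic Γ h hh B).2 this
  · exact H.sat_ex Γ h hh hs ys B this

theorem SubProd.pres_neg [hI : Nonempty I] (H : SubProd W w π) (Γ : Set (Formula S)) (vs : List ℕ)
    (b : Formula S) (bs : List (Formula S))
    (hbs : ∀ c ∈ b :: bs, c.isAtomic)
    (hw : ∀ i, ModelsF Sem.any (w i) Γ (uclosure vs (Formula.not (andAll b bs)))) :
    ModelsF Sem.any W Γ (uclosure vs (Formula.not (andAll b bs))) := by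
  simp only [modelsF_uclosure] at hw ⊢
  intro B
  show ¬ _
  rw [sat_andAll]
  intro hb
  obtain ⟨i⟩ := hI
  refine hw i (fun x => π i (B x)) ?_
  rw [sat_andAll]
  exact fun c hc => (H.sat_atomic Γ c (hbs c hc) B).1 (hb c hc) i

theorem SubProd.pres_gHorn [hI : Nonempty I] (H : SubProd W w π) (Γ : Set (Formula S))
    (hs : ∀ u : ∀ i, (w i).U, ∃ v, ∀ i, π i v = u i) (φ : Formula S) (hφ : isGHornSentence φ)
    (hw : ∀ i, ModelsF Sem.any (w i) Γ φ) : ModelsF Sem.any W Γ φ := by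
  obtain ⟨vs, bs, hbs, ⟨ys, h, hh, -, rfl⟩ | ⟨b, rest, rfl, rfl⟩⟩ := hφ
  · exact H.pres_imp Γ vs bs ys h hbs hh (Or.inr hs) hw
  · exact H.pres_neg Γ vs b rest hbs hw

theorem SubProd.pres_horn [hI : Nonempty I] (H : SubProd W w π) (Γ : Set (Formula S))
    (φ : Formula S) (hφ : isHornSentence φ)
    (hw : ∀ i, ModelsF Sem.any (w i) Γ φ) : ModelsF Sem.any W Γ φ := by
  obtain ⟨vs, bs, hbs, ⟨h, hh, rfl⟩ | ⟨b, rest, rfl, rfl⟩⟩ := hφ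
  · exact H.pres_imp Γ vs bs [] h hbs hh (Or.inl rfl) hw
  · exact H.pres_neg Γ vs b rest hbs hw

theorem SubProd.box_down (H : SubProd W w π) (Γ : Set (Formula S)) (a : PAtom S) (B : ℕ → W.U)
    (h : Sat Sem.any W Γ a.toFormula.box B) (i : I) :
    Sat Sem.any (w i) Γ a.toFormula.box (fun x => π i (B x)) := by
  obtain ⟨β, h1, h2, h3⟩ := h
  obtain ⟨γ, hγ⟩ := exists_assoc (w i) (fun x => π i (B x))
  let β' : ℕ → Option (Term S) := fun x => if (β x).isSome then β x else γ x
  have hβ' : Assoc (w i) (fun x => π i (B x)) β' := by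
    intro x
    by_cases hx : (β x).isSome
    · simp only [β', hx, if_true]
      refine ⟨fun _ => trivial, fun t ht => ?_⟩
      obtain ⟨h4, h5⟩ := (h1 x).2 t ht
      exact ⟨h4, by rw [← H.evalG i t h4, h5]⟩
    · simp only [β', hx]
      exact hγ x
  have hg := (closed_atom_iff _ _).1 h2
  have : a.toFormula.subst β = a.toFormula.subst β' := by
    simp only [PAtom.toFormula, Formula.subst]
    congr 1
    funext j
    refine Term.subst_congr _ _ _ fun x hx => ?_
    have := (Term.isGround_subst β (a.args j) (fun x t ht => ((h1 x).2 t ht).1)).1 (hg j) x hx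
    simp [β', this]
  exact ⟨β', hβ', this ▸ h2, this ▸ h3⟩

end SP

theorem named_of_box (w : Interp S) (Γ : Set (Formula S)) (a : PAtom S) (B : ℕ → w.U)
    (h : Sat Sem.any w Γ a.toFormula.box B) (x : ℕ) (hx : a.hasVar x) : IsNamed w (B x) := by
  obtain ⟨β, h1, h2, h3⟩ := h
  have hg := (closed_atom_iff _ _).1 h2
  obtain ⟨j, hj⟩ := hx
  have := (Term.isGround_subst β (a.args j) (fun x t ht => ((h1 x).2 t ht).1)).1 (hg j) x hj
  obtain ⟨t, ht⟩ := Option.isSome_iff_exists.1 this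
  exact ⟨t, (h1 x).2 t ht⟩

/-- Ground atoms true in `w` belong to `Γ`. -/
def GAComplete (w : Interp S) (Γ : Set (Formula S)) : Prop :=
  ∀ φ, IsOga φ → (∃ B, Sat Sem.any w Γ φ B) → φ ∈ Γ

theorem box_of_named (w : Interp S) (Γ : Set (Formula S)) (hc : GAComplete w Γ) (a : PAtom S)
    (B : ℕ → w.U) (hn : ∀ x, a.hasVar x → IsNamed w (B x))
    (h : Sat Sem.any w Γ a.toFormula B) : Sat Sem.any w Γ a.toFormula.box B := by
  obtain ⟨β, hβ⟩ := exists_assoc w B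
  have hcl : (a.toFormula.subst β).closed := by
    refine (closed_atom_iff _ _).2 fun j => ?_
    refine (Term.isGround_subst β (a.args j) (fun x t ht => ((hβ x).2 t ht).1)).2 fun x hx => ?_
    exact (hβ x).1 (hn x ⟨j, hx⟩)
  refine ⟨β, hβ, hcl, hc _ (oga_of_closed _ trivial hcl) ⟨B, ?_⟩⟩
  simp only [PAtom.toFormula, Formula.subst, Sat] at h ⊢
  simpa only [Term.eval_subst w B β hβ] using h

theorem box_eq_iff (w : Interp S) (Γ : Set (Formula S)) (t₁ t₂ : Term S) (h1 : t₁.isGround)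
    (h2 : t₂.isGround) (B : ℕ → w.U) :
    Sat Sem.any w Γ (Formula.eq t₁ t₂).box B ↔ Formula.eq t₁ t₂ ∈ Γ := by
  simp only [Sat, Formula.subst, Term.subst_ground _ _ h1, Term.subst_ground _ _ h2,
    closed_eq_iff, h1, h2, true_and, and_true]
  constructor
  · rintro ⟨_, _, h⟩; exact h
  · intro h
    obtain ⟨β, hβ⟩ := exists_assoc w B
    exact ⟨β, hβ, h⟩

section SP2

variable {W : Interp S} {I : Type} {w : I → Interp S} {π : ∀ i, W.U → (w i).U}

theorem SubProd.pres_UNA (H : SubProd W w π) [hI : Nonempty I] (Γ : Set (Formula S))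
    (P : Program S) (hw : ∀ i, ModelsT Sem.any (w i) Γ (UNAax P)) :
    ModelsT Sem.any W Γ (UNAax P) := by
  intro φ hφ
  have hφ' := hφ
  obtain ⟨t₁, t₂, h1, h2, -, rfl⟩ := hφ'
  intro B
  obtain ⟨i⟩ := hI
  have h := hw i _ hφ (fun x => π i (B x))
  have g1 := Term.isNameOf_ground _ _ h1
  have g2 := Term.isNameOf_ground _ _ h2
  have e1 := box_eq_iff W Γ t₁ t₂ g1 g2 B
  have e2 := box_eq_iff (w i) Γ t₁ t₂ g1 g2 (fun x => π i (B x))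
  have e3 := H.sat_atomic Γ (Formula.eq t₁ t₂) trivial B
  change ¬ (¬ Sat Sem.any (w i) Γ (Formula.eq t₁ t₂).box _ ∧
    ¬ ¬ Sat Sem.any (w i) Γ (Formula.eq t₁ t₂) _) at h
  change ¬ (¬ Sat Sem.any W Γ (Formula.eq t₁ t₂).box _ ∧
    ¬ ¬ Sat Sem.any W Γ (Formula.eq t₁ t₂) _)
  rw [e1, e3]
  rw [e2] at h
  intro ⟨h3, h4⟩
  exact h ⟨h3, not_not.2 (not_not.1 h4 i)⟩

theorem SubProd.pres_EB (H : SubProd W w π) (Γ : Set (Formula S))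
    (r : Rule S) (h : PAtom S) (hh : r.head = [h]) (hn : r.neg = [])
    (hw : ∀ i, ModelsF Sem.any (w i) Γ (embEB r)) : ModelsF Sem.any W Γ (embEB r) := by
  simp only [models_EB _ Γ r h hh hn] at hw ⊢
  intro B hB
  refine (H.sat_atomic Γ (PAtom.toFormula _) trivial B).2 fun i => hw i _ fun b hb => ?_
  exact ⟨(H.sat_atomic Γ (PAtom.toFormula _) trivial B).1 (hB b hb).1 i, H.box_down Γ b B (hB b hb).2 i⟩

end SP2

theorem EB_of_EH (w : Interp S) (Γ : Set (Formula S))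
    (r : Rule S) (h : PAtom S) (hh : r.head = [h]) (hn : r.neg = [])
    (hw : ModelsF Sem.any w Γ (embEH r)) : ModelsF Sem.any w Γ (embEB r) := by
  rw [models_EB _ Γ r h hh hn]
  rw [models_EH _ Γ r h hh hn] at hw
  exact fun B hB => (hw B hB).1

theorem EB_of_HP (w : Interp S) (Γ : Set (Formula S))
    (r : Rule S) (h : PAtom S) (hh : r.head = [h]) (hn : r.neg = [])
    (hw : ModelsF Sem.any w Γ (embHP r)) : ModelsF Sem.any w Γ (embEB r) := by
  rw [models_EB _ Γ r h hh hn]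
  rw [models_HP _ Γ r h hh hn] at hw
  exact fun B hB => hw B fun b hb => (hB b hb).1

theorem EH_of_EB_safe (w : Interp S) (Γ : Set (Formula S)) (hc : GAComplete w Γ)
    (r : Rule S) (h : PAtom S) (hh : r.head = [h]) (hn : r.neg = []) (hs : r.isSafe)
    (hw : ModelsF Sem.any w Γ (embEB r)) : ModelsF Sem.any w Γ (embEH r) := by
  rw [models_EB _ Γ r h hh hn] at hw
  rw [models_EH _ Γ r h hh hn]
  intro B hB
  refine ⟨hw B hB, box_of_named w Γ hc h B (fun x hx => ?_) (hw B hB)⟩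
  obtain ⟨a, ha, hax⟩ := hs x ⟨h, by simp [Rule.atoms, hh], hx⟩
  exact named_of_box w Γ a B (hB a ha).2 x hax

theorem HPEH_of_EB_named (w : Interp S) (Γ : Set (Formula S)) (hc : GAComplete w Γ)
    (r : Rule S) (h : PAtom S) (hh : r.head = [h]) (hn : r.neg = [])
    (hs : ∀ x, r.hasVar x → ∀ u : w.U, IsNamed w u)
    (hw : ModelsF Sem.any w Γ (embEB r)) :
    ModelsF Sem.any w Γ (embHP r) ∧ ModelsF Sem.any w Γ (embEH r) := by
  rw [models_EB _ Γ r h hh hn] at hw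
  rw [models_EH _ Γ r h hh hn, models_HP _ Γ r h hh hn]
  constructor
  · intro B hB
    refine hw B fun b hb => ⟨hB b hb, box_of_named w Γ hc b B (fun x hx => ?_) (hB b hb)⟩
    exact hs x ⟨b, by simp [Rule.atoms, hb], hx⟩ _
  · intro B hB
    refine ⟨hw B hB, box_of_named w Γ hc h B (fun x hx => ?_) (hw B hB)⟩
    exact hs x ⟨h, by simp [Rule.atoms, hh], hx⟩ _

/-! ### Products -/

def prodI {I : Type} (w : I → Interp S) : Interp S where
  U := ∀ i, (w i).U
  nonempty := ⟨fun i => (w i).dflt⟩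
  interpF f us := fun i => (w i).interpF f (fun j => us j i)
  interpP p us := ∀ i, (w i).interpP p (fun j => us j i)

theorem prodI_sub {I : Type} (w : I → Interp S) :
    SubProd (prodI w) w (fun i u => u i) where
  func _ _ _ := rfl
  pred _ _ := Iff.rfl
  inj _ _ h := funext h

def namedI (w : Interp S) (t₀ : Term S) (h₀ : t₀.isGround) : Interp S where
  U := {u : w.U // IsNamed w u}
  nonempty := ⟨⟨t₀.evalG w, t₀, h₀, rfl⟩⟩
  interpF f us := ⟨w.interpF f (fun j => (us j).1), by
    refine ⟨Term.func f (fun j => (us j).2.choose), fun j => (us j).2.choose_spec.1, ?_⟩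
    have : ∀ j, Term.eval w (fun _ => w.dflt) (us j).2.choose = (us j).1 :=
      fun j => (us j).2.choose_spec.2
    simp only [Term.evalG, Term.eval]
    exact congrArg _ (funext this)⟩
  interpP p us := w.interpP p (fun j => (us j).1)

theorem namedI_sub {I : Type} (w : I → Interp S) (t₀ : Term S) (h₀ : t₀.isGround) :
    SubProd (namedI (prodI w) t₀ h₀) w (fun i u => u.1 i) where
  func _ _ _ := rfl
  pred _ _ := Iff.rfl
  inj _ _ h := Subtype.ext (funext h)

theorem namedI_evalG (w : Interp S) (t₀ : Term S) (h₀ : t₀.isGround) (B : ℕ → (namedI w t₀ h₀).U)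
    (t : Term S) : (t.eval (namedI w t₀ h₀) B).1 = t.eval w (fun x => (B x).1) := by
  induction t with
  | var y => rfl
  | func f ts ih =>
    simp only [Term.eval, ← ih]
    rfl

theorem namedI_named (w : Interp S) (t₀ : Term S) (h₀ : t₀.isGround)
    (u : (namedI w t₀ h₀).U) : IsNamed (namedI w t₀ h₀) u := by
  obtain ⟨u, t, ht, hu⟩ := u
  refine ⟨t, ht, Subtype.ext ?_⟩
  rw [Term.evalG, namedI_evalG, Term.eval_ground _ _ _ ht]
  exact hu

/-! ### Fixpoint comparison -/

/-- The key property: from a nonempty family of models of `Ψ₀` relative to `Γ` whose common ground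
atoms belong to `Γ`, one obtains a model of `Ψ` with exactly the common ground atoms. -/
def Key (Γ Ψ₀ Ψ : Set (Formula S)) : Prop :=
  ∀ (I : Type) (_ : Nonempty I) (w : I → Interp S),
    (∀ i, ModelsT Sem.any (w i) Γ Ψ₀) →
    (∀ φ, IsOga φ → (∀ i, ModelsF Sem.any (w i) Γ φ) → φ ∈ Γ) →
    ∃ W, ModelsT Sem.any W Γ Ψ ∧
      ∀ φ, IsOga φ → ModelsF Sem.any W Γ φ → ∀ i, ModelsF Sem.any (w i) Γ φ

theorem fix_transfer (Γ Ψ₀ X Y : Set (Formula S))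
    (hX : ∀ w, ModelsT Sem.any w Γ X → ModelsT Sem.any w Γ Ψ₀)
    (hY : ∀ w, ModelsT Sem.any w Γ Y → ModelsT Sem.any w Γ Ψ₀)
    (kX : Key Γ Ψ₀ X) (kY : Key Γ Ψ₀ Y) (h : IsFix X Γ) : IsFix Y Γ := by
  have hcm : ∀ φ : {φ : Formula S // IsOga φ ∧ φ ∉ Γ}, ∃ w, ModelsT Sem.any w Γ X ∧
      ¬ ModelsF Sem.any w Γ φ.1 := by
    rintro ⟨φ, h1, h2⟩
    rw [h φ] at h2
    by_contra hcon
    push Not at hcon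
    exact h2 ⟨h1, hcon⟩
  choose cm hcm1 hcm2 using hcm
  intro φ
  constructor
  · intro hφ
    have ho := ((h φ).1 hφ).1
    refine ⟨ho, fun w hw => ?_⟩
    obtain ⟨W, hW1, hW2⟩ := kX (Option {φ : Formula S // IsOga φ ∧ φ ∉ Γ}) ⟨none⟩
      (fun o => o.elim w cm) (by
        rintro (_ | i)
        · exact hY w hw
        · exact hX _ (hcm1 i)) (by
        intro ψ h1 h2
        by_contra h3
        exact hcm2 ⟨ψ, h1, h3⟩ (h2 (some ⟨ψ, h1, h3⟩)))
    exact hW2 φ ho (((h φ).1 hφ).2 W hW1) none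
  · rintro ⟨ho, he⟩
    by_contra hφ
    obtain ⟨W, hW1, hW2⟩ := kY {φ : Formula S // IsOga φ ∧ φ ∉ Γ} ⟨⟨φ, ho, hφ⟩⟩ cm
      (fun i => hX _ (hcm1 i)) (by
        intro ψ h1 h2
        by_contra h3
        exact hcm2 ⟨ψ, h1, h3⟩ (h2 ⟨ψ, h1, h3⟩))
    exact hcm2 ⟨φ, ho, hφ⟩ (hW2 φ ho (he W hW1) _)

theorem sat_oga_B (w : Interp S) (Γ : Set (Formula S)) (φ : Formula S) (h : IsOga φ)
    (B B' : ℕ → w.U) (hs : Sat Sem.any w Γ φ B) : Sat Sem.any w Γ φ B' := by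
  obtain ⟨_, h2, h3⟩ := h
  cases φ with
  | atom p ts =>
    have h2' : ∀ i, (ts i).isGround := h2
    simp only [Sat, fun B i => Term.eval_ground w B _ (h2' i)] at hs ⊢
    exact hs
  | eq a b =>
    have h2' : a.isGround ∧ b.isGround := h2
    simp only [Sat, fun B => Term.eval_ground w B _ h2'.1,
      fun B => Term.eval_ground w B _ h2'.2] at hs ⊢
    exact hs
  | _ => simp [Formula.isAtomic] at h3

section SP3

variable {W : Interp S} {I : Type} {w : I → Interp S} {π : ∀ i, W.U → (w i).U}

theorem SubProd.oga_down (H : SubProd W w π) (Γ : Set (Formula S)) (φ : Formula S) (h : IsOga φ)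
    (hs : ∃ B, Sat Sem.any W Γ φ B) (i : I) : ModelsF Sem.any (w i) Γ φ := by
  obtain ⟨B, hB⟩ := hs
  exact fun B' => sat_oga_B _ _ _ h _ _ ((H.sat_atomic Γ φ h.2.2 B).1 hB i)

theorem SubProd.compl (H : SubProd W w π) (Γ : Set (Formula S))
    (hc : ∀ φ, IsOga φ → (∀ i, ModelsF Sem.any (w i) Γ φ) → φ ∈ Γ) : GAComplete W Γ :=
  fun φ h hs => hc φ h (H.oga_down Γ φ h hs)

end SP3

theorem modelsT_split (w : Interp S) (Γ Φ : Set (Formula S)) (P : Program S)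
    (emb : Rule S → Formula S) :
    ModelsT Sem.any w Γ (Φ ∪ (ruleEmb emb P ∪ UNAax P)) ↔
      ModelsT Sem.any w Γ Φ ∧ (∀ r ∈ P, ModelsF Sem.any w Γ (emb r)) ∧
        ModelsT Sem.any w Γ (UNAax P) := by
  constructor
  · intro h
    exact ⟨fun φ hφ => h φ (Or.inl hφ), fun r hr => h _ (Or.inr (Or.inl ⟨r, hr, rfl⟩)),
      fun φ hφ => h φ (Or.inr (Or.inr hφ))⟩
  · rintro ⟨h1, h2, h3⟩ φ (h | ⟨r, hr, rfl⟩ | h)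
    · exact h1 φ h
    · exact h2 r hr
    · exact h3 φ h

theorem key_safe (Φ : Set (Formula S)) (P : Program S) (hΦ : ∀ φ ∈ Φ, isGHornSentence φ)
    (hN : progNormal P) (hS : progSafe P) (hPos : progPositive P) (Γ : Set (Formula S)) :
    Key Γ (Φ ∪ tauEB P) (Φ ∪ tauEB P) ∧ Key Γ (Φ ∪ tauEB P) (Φ ∪ tauEH P) := by
  have main : ∀ (I : Type) (_ : Nonempty I) (w : I → Interp S),
      (∀ i, ModelsT Sem.any (w i) Γ (Φ ∪ tauEB P)) →
      (∀ φ, IsOga φ → (∀ i, ModelsF Sem.any (w i) Γ φ) → φ ∈ Γ) →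
      ∃ W, (ModelsT Sem.any W Γ (Φ ∪ tauEB P) ∧ ModelsT Sem.any W Γ (Φ ∪ tauEH P)) ∧
        ∀ φ, IsOga φ → ModelsF Sem.any W Γ φ → ∀ i, ModelsF Sem.any (w i) Γ φ := by
    intro I hI w hw hc
    have H := prodI_sub w
    simp only [tauEB, tauEH, modelsT_split] at hw ⊢
    have hcW := H.compl Γ hc
    have h1 : ModelsT Sem.any (prodI w) Γ Φ := fun φ hφ =>
      H.pres_gHorn Γ (fun u => ⟨u, fun i => rfl⟩) φ (hΦ φ hφ) (fun i => (hw i).1 φ hφ)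
    have h3 : ModelsT Sem.any (prodI w) Γ (UNAax P) := H.pres_UNA Γ P fun i => (hw i).2.2
    have h2 : ∀ r ∈ P, ModelsF Sem.any (prodI w) Γ (embEB r) := fun r hr => by
      obtain ⟨h, hh⟩ := head_of_normal r (hN r hr)
      exact H.pres_EB Γ r h hh (hPos r hr) fun i => (hw i).2.1 r hr
    refine ⟨prodI w, ⟨⟨h1, h2, h3⟩, h1, fun r hr => ?_, h3⟩,
      fun φ ho hφ i => H.oga_down Γ φ ho ⟨fun _ => (prodI w).dflt, hφ _⟩ i⟩
    obtain ⟨h, hh⟩ := head_of_normal r (hN r hr)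
    exact EH_of_EB_safe _ Γ hcW r h hh (hPos r hr) (hS r hr) (h2 r hr)
  constructor
  · intro I hI w hw hc
    obtain ⟨W, h1, h2⟩ := main I hI w hw hc
    exact ⟨W, h1.1, h2⟩
  · intro I hI w hw hc
    obtain ⟨W, h1, h2⟩ := main I hI w hw hc
    exact ⟨W, h1.2, h2⟩

theorem key_horn (Φ : Set (Formula S)) (P : Program S) (hΦ : ∀ φ ∈ Φ, isHornSentence φ)
    (hN : progNormal P) (hPos : progPositive P) (hG : goodSig P) (Γ : Set (Formula S)) :
    Key Γ (Φ ∪ tauEB P) (Φ ∪ tauHP P) ∧ Key Γ (Φ ∪ tauEB P) (Φ ∪ tauEB P) ∧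
      Key Γ (Φ ∪ tauEB P) (Φ ∪ tauEH P) := by
  have main : ∀ (I : Type) (_ : Nonempty I) (w : I → Interp S),
      (∀ i, ModelsT Sem.any (w i) Γ (Φ ∪ tauEB P)) →
      (∀ φ, IsOga φ → (∀ i, ModelsF Sem.any (w i) Γ φ) → φ ∈ Γ) →
      ∃ W, (ModelsT Sem.any W Γ (Φ ∪ tauHP P) ∧ ModelsT Sem.any W Γ (Φ ∪ tauEB P) ∧
          ModelsT Sem.any W Γ (Φ ∪ tauEH P)) ∧
        ∀ φ, IsOga φ → ModelsF Sem.any W Γ φ → ∀ i, ModelsF Sem.any (w i) Γ φ := by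
    intro I hI w hw hc
    simp only [tauEB, tauEH, tauHP, modelsT_split] at hw ⊢
    obtain ⟨W, π, H, hnm⟩ : ∃ (W : Interp S) (π : ∀ i, W.U → (w i).U), SubProd W w π ∧
        ∀ r ∈ P, ∀ x, r.hasVar x → ∀ u : W.U, IsNamed W u := by
      by_cases ht : ∃ t₀ : Term S, t₀.isGround
      · obtain ⟨t₀, h₀⟩ := ht
        exact ⟨_, _, namedI_sub w t₀ h₀, fun _ _ _ _ u => namedI_named _ t₀ h₀ u⟩
      · refine ⟨_, _, prodI_sub w, fun r hr x hx => ?_⟩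
        exfalso
        obtain ⟨a, ha, j, hj⟩ := hx
        obtain ⟨f, -, hf⟩ := hG ⟨a.p, ⟨r, hr, a, ha, rfl⟩, by have := j.2; omega⟩
        exact ht ⟨Term.func f (fun _ => Term.var 0), fun i => by
          have := i.2; omega⟩
    have hcW := H.compl Γ hc
    have h1 : ModelsT Sem.any W Γ Φ := fun φ hφ =>
      H.pres_horn Γ φ (hΦ φ hφ) (fun i => (hw i).1 φ hφ)
    have h3 : ModelsT Sem.any W Γ (UNAax P) := H.pres_UNA Γ P fun i => (hw i).2.2
    have h2 : ∀ r ∈ P, ModelsF Sem.any W Γ (embEB r) := fun r hr => by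
      obtain ⟨h, hh⟩ := head_of_normal r (hN r hr)
      exact H.pres_EB Γ r h hh (hPos r hr) fun i => (hw i).2.1 r hr
    have h4 : ∀ r ∈ P, ModelsF Sem.any W Γ (embHP r) ∧ ModelsF Sem.any W Γ (embEH r) :=
      fun r hr => by
        obtain ⟨h, hh⟩ := head_of_normal r (hN r hr)
        exact HPEH_of_EB_named _ Γ hcW r h hh (hPos r hr) (hnm r hr) (h2 r hr)
    exact ⟨W, ⟨⟨h1, fun r hr => (h4 r hr).1, h3⟩, ⟨h1, h2, h3⟩, h1, fun r hr => (h4 r hr).2, h3⟩,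
      fun φ ho hφ i => H.oga_down Γ φ ho ⟨fun _ => W.dflt, hφ _⟩ i⟩
  refine ⟨?_, ?_, ?_⟩
  · intro I hI w hw hc
    obtain ⟨W, h1, h2⟩ := main I hI w hw hc
    exact ⟨W, h1.1, h2⟩
  · intro I hI w hw hc
    obtain ⟨W, h1, h2⟩ := main I hI w hw hc
    exact ⟨W, h1.2.1, h2⟩
  · intro I hI w hw hc
    obtain ⟨W, h1, h2⟩ := main I hI w hw hc
    exact ⟨W, h1.2.2, h2⟩

theorem weak_EH (Γ Φ : Set (Formula S)) (P : Program S) (hN : progNormal P)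
    (hPos : progPositive P) (w : Interp S) (h : ModelsT Sem.any w Γ (Φ ∪ tauEH P)) :
    ModelsT Sem.any w Γ (Φ ∪ tauEB P) := by
  simp only [tauEB, tauEH, modelsT_split] at h ⊢
  refine ⟨h.1, fun r hr => ?_, h.2.2⟩
  obtain ⟨a, ha⟩ := head_of_normal r (hN r hr)
  exact EB_of_EH w Γ r a ha (hPos r hr) (h.2.1 r hr)

theorem weak_HP (Γ Φ : Set (Formula S)) (P : Program S) (hN : progNormal P)
    (hPos : progPositive P) (w : Interp S) (h : ModelsT Sem.any w Γ (Φ ∪ tauHP P)) :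
    ModelsT Sem.any w Γ (Φ ∪ tauEB P) := by
  simp only [tauEB, tauHP, modelsT_split] at h ⊢
  refine ⟨h.1, fun r hr => ?_, h.2.2⟩
  obtain ⟨a, ha⟩ := head_of_normal r (hN r hr)
  exact EB_of_HP w Γ r a ha (hPos r hr) (h.2.1 r hr)

end Helpers

/-- For a generalized Horn theory `Φ` and a safe positive normal
program `P`, `ι_EB(Φ,P) ≡ᴱ_oga ι_EH(Φ,P)`; for a Horn theory `Φ` and a positive
normal program `P`, `ι_HP(Φ,P) ≡ᴱ_oga ι_EB(Φ,P) ≡ᴱ_oga ι_EH(Φ,P)`. -/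
theorem stmt14 {S : Sig} :
    (∀ (Φ : Set (Formula S)) (P : Program S),
        GHornTheory Φ → progWf P → progNormal P → progSafe P → progPositive P →
        goodSig P → CoverSig Φ P →
        ExpEquivSel Sem.any ogaOf (Φ ∪ tauEB P) (Φ ∪ tauEH P)) ∧
    (∀ (Φ : Set (Formula S)) (P : Program S),
        HornTheory Φ → progWf P → progNormal P → progPositive P →
        goodSig P → CoverSig Φ P →
        ExpEquivSel Sem.any ogaOf (Φ ∪ tauHP P) (Φ ∪ tauEB P) ∧
        ExpEquivSel Sem.any ogaOf (Φ ∪ tauEB P) (Φ ∪ tauEH P) ∧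
        ExpEquivSel Sem.any ogaOf (Φ ∪ tauHP P) (Φ ∪ tauEH P)) := by
  constructor
  · intro Φ P hΦ _ hN hS hPos _ _
    have bB := boxAtomic_all Φ P hΦ.1 hN embEB (by simp)
    have bH := boxAtomic_all Φ P hΦ.1 hN embEH (by simp)
    refine equiv_of_fix _ _ bB bH fun Γ => ?_
    obtain ⟨k1, k2⟩ := key_safe Φ P hΦ.2 hN hS hPos Γ
    exact ⟨fix_transfer Γ _ _ _ (fun _ h => h) (weak_EH Γ Φ P hN hPos) k1 k2,
      fix_transfer Γ _ _ _ (weak_EH Γ Φ P hN hPos) (fun _ h => h) k2 k1⟩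
  · intro Φ P hΦ _ hN hPos hG _
    have bP := boxAtomic_all Φ P hΦ.1 hN embHP (by simp)
    have bB := boxAtomic_all Φ P hΦ.1 hN embEB (by simp)
    have bH := boxAtomic_all Φ P hΦ.1 hN embEH (by simp)
    refine ⟨equiv_of_fix _ _ bP bB fun Γ => ?_, equiv_of_fix _ _ bB bH fun Γ => ?_,
      equiv_of_fix _ _ bP bH fun Γ => ?_⟩
    all_goals obtain ⟨k0, k1, k2⟩ := key_horn Φ P hΦ.2 hN hPos hG Γ
    · exact ⟨fix_transfer Γ _ _ _ (weak_HP Γ Φ P hN hPos) (fun _ h => h) k0 k1,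
        fix_transfer Γ _ _ _ (fun _ h => h) (weak_HP Γ Φ P hN hPos) k1 k0⟩
    · exact ⟨fix_transfer Γ _ _ _ (fun _ h => h) (weak_EH Γ Φ P hN hPos) k1 k2,
        fix_transfer Γ _ _ _ (weak_EH Γ Φ P hN hPos) (fun _ h => h) k2 k1⟩
    · exact ⟨fix_transfer Γ _ _ _ (weak_HP Γ Φ P hN hPos) (weak_EH Γ Φ P hN hPos) k0 k2,
        fix_transfer Γ _ _ _ (weak_EH Γ Φ P hN hPos) (weak_HP Γ Φ P hN hPos) k2 k0⟩
end
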